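/- arXiv:1201.5331 — 4 statements merged into one kernel-verified Lean document; each statement's English description precedes it below -/
import Mathlib

section
/- Let V : ℝ³ → ℝ be measurable with V ∈ L^{3/2,1}(ℝ³). Suppose φ : ℝ³ → ℂ is essentially bounded and satisfies, for a.e. x ∈ ℝ³, that y ↦ V(y)φ(y)/‖x−y‖ is integrable and φ(x) = −(1/(4π)) ∫_{ℝ³} V(y)φ(y)/‖x−y‖ dy. Then φ ∈ L^{3,∞}(ℝ³), i.e. sup_{λ>0} λ·(vol{x : |φ(x)| > λ})^{1/3} < ∞. -/
open MeasureTheory ENNReal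

/-- `ℝ³` as a Euclidean space. -/
abbrev E3 := EuclideanSpace ℝ (Fin 3)

/-- The quantity `∫₀^∞ (vol{x : |f x| > λ})^{2/3} dλ`, an equivalent characterization of
the Lorentz `L^{3/2,1}` norm. -/
noncomputable def lorentzNorm321 {α : Type*} [NormedAddCommGroup α] (f : E3 → α) : ℝ≥0∞ :=
  ∫⁻ lam in Set.Ioi (0 : ℝ), (volume {x : E3 | lam < ‖f x‖}) ^ ((2 : ℝ) / 3)

/-- A function belongs to the Lorentz space `L^{3/2,1}(ℝ³)`. -/
def MemL321 {α : Type*} [NormedAddCommGroup α] (f : E3 → α) : Prop :=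
  lorentzNorm321 f < ⊤

/-- The weak-`L³` quasinorm `sup_{λ>0} λ·(vol{x : |f x| > λ})^{1/3}`. -/
noncomputable def weakL3Norm {α : Type*} [NormedAddCommGroup α] (f : E3 → α) : ℝ≥0∞ :=
  ⨆ (lam : ℝ) (_ : 0 < lam),
    ENNReal.ofReal lam * (volume {x : E3 | lam < ‖f x‖}) ^ ((1 : ℝ) / 3)

/-- A function belongs to weak-`L³(ℝ³)`, i.e. `L^{3,∞}`. -/
def MemWeakL3 {α : Type*} [NormedAddCommGroup α] (f : E3 → α) : Prop :=
  weakL3Norm f < ⊤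

/-- The (unnormalised) Newton kernel with values in `ℝ≥0∞`. -/
noncomputable def nk (x y : E3) : ℝ≥0∞ := ENNReal.ofReal (‖x - y‖⁻¹)

lemma nk_comm (x y : E3) : nk x y = nk y x := by
  unfold nk; rw [norm_sub_rev]

lemma nk_meas : Measurable (Function.uncurry nk) := by
  unfold nk Function.uncurry
  fun_prop

lemma nk_meas_left (x : E3) : Measurable (nk x) := by
  unfold nk
  fun_prop

lemma nk_bound_aux (x : E3) (B : Set E3) (s : ℝ) (hs : 0 < s) :
    ∫⁻ y in B, nk x y ≤ volume B * ENNReal.ofReal s +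
      ENNReal.ofReal (s ^ (-2 : ℝ)) * volume (Metric.ball (0 : E3) 1) := by
  unfold nk
  rw [lintegral_eq_lintegral_meas_lt (volume.restrict B)
    (Filter.Eventually.of_forall fun y => by positivity) (by fun_prop)]
  have hU : Set.Ioi (0:ℝ) = Set.Ioc 0 s ∪ Set.Ioi s := by
    rw [Set.Ioc_union_Ioi_eq_Ioi hs.le]
  rw [hU]
  refine (lintegral_union_le _ _ _).trans (add_le_add ?_ ?_)
  · calc ∫⁻ t in Set.Ioc 0 s, (volume.restrict B) {a | t < ‖x - a‖⁻¹}
        ≤ ∫⁻ t in Set.Ioc 0 s, volume B := by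
          refine lintegral_mono fun t => ?_
          refine (measure_mono (Set.subset_univ _)).trans ?_
          simp
      _ = volume B * ENNReal.ofReal s := by simp
  · calc ∫⁻ t in Set.Ioi s, (volume.restrict B) {a | t < ‖x - a‖⁻¹}
        ≤ ∫⁻ t in Set.Ioi s, ENNReal.ofReal (t ^ (-3 : ℝ)) * volume (Metric.ball (0 : E3) 1) := by
          refine setLIntegral_mono' measurableSet_Ioi fun t ht => ?_
          have ht0 : 0 < t := hs.trans ht
          refine (Measure.restrict_apply_le _ _).trans ?_
          have hsub : {a : E3 | t < ‖x - a‖⁻¹} ⊆ Metric.ball x t⁻¹ := by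
            intro a ha
            simp only [Set.mem_ofPred_eq] at ha
            have h1 : 0 < ‖x - a‖ := inv_pos.mp (ht0.trans ha)
            rw [Metric.mem_ball, dist_comm, dist_eq_norm]
            exact (lt_inv_comm₀ ht0 h1).mp ha
          refine (measure_mono hsub).trans ?_
          rw [Measure.addHaar_ball _ _ (by positivity)]
          simp only [finrank_euclideanSpace, Fintype.card_fin]
          rw [Real.rpow_neg ht0.le]
          gcongr
          rw [inv_pow]
          norm_cast
      _ = (∫⁻ t in Set.Ioi s, ENNReal.ofReal (t ^ (-3 : ℝ))) * volume (Metric.ball (0 : E3) 1) := by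
          rw [lintegral_mul_const]
          fun_prop
      _ ≤ _ := by
          gcongr
          rw [← ofReal_integral_eq_lintegral_ofReal
            (integrableOn_Ioi_rpow_of_lt (by norm_num) hs)]
          · rw [integral_Ioi_rpow_of_lt (by norm_num) hs]
            apply ENNReal.ofReal_le_ofReal
            have : 0 < s ^ (-2 : ℝ) := by positivity
            norm_num
            norm_num at this
            linarith
          · filter_upwards [ae_restrict_mem measurableSet_Ioi] with t ht
            have ht0 : 0 < t := hs.trans ht
            positivity

/-- Constant in the kernel bound. -/
noncomputable def nkC : ℝ≥0∞ := 1 + volume (Metric.ball (0 : E3) 1)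

lemma nkC_ne_top : nkC ≠ ⊤ := by
  unfold nkC
  exact ENNReal.add_ne_top.mpr ⟨by simp, measure_ball_lt_top.ne⟩

lemma nkC_ne_zero : nkC ≠ 0 := by
  unfold nkC
  simp

lemma nk_bound (x : E3) (B : Set E3) :
    ∫⁻ y in B, nk x y ≤ nkC * (volume B) ^ ((2 : ℝ) / 3) := by
  by_cases h0 : volume B = 0
  · rw [Measure.restrict_eq_zero.mpr h0]; simp
  by_cases h1 : volume B = ⊤
  · rw [h1, ENNReal.top_rpow_of_pos (by norm_num), ENNReal.mul_top nkC_ne_zero]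
    exact le_top
  have hb : 0 < (volume B).toReal := ENNReal.toReal_pos h0 h1
  have e : volume B = ENNReal.ofReal (volume B).toReal := (ENNReal.ofReal_toReal h1).symm
  set b := (volume B).toReal with hbdef
  have hs : 0 < b ^ (-(1:ℝ)/3) := by positivity
  refine (nk_bound_aux x B _ hs).trans ?_
  rw [e, ENNReal.ofReal_rpow_of_pos hb, ← ENNReal.ofReal_mul hb.le, ← Real.rpow_mul hb.le]
  nth_rewrite 1 [← Real.rpow_one b]
  rw [← Real.rpow_add hb]
  unfold nkC
  norm_num
  rw [add_mul, one_mul]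
  exact le_of_eq (by ring)

/-- Part of `W` coming from levels in `J`. -/
noncomputable def lay (W : E3 → ℝ) (J : Set ℝ) (y : E3) : ℝ≥0∞ :=
  ∫⁻ t in J, Set.indicator {p : ℝ × E3 | p.1 < W p.2} 1 (t, y)

lemma lay_set_meas {W : E3 → ℝ} (hW : Measurable W) :
    MeasurableSet {p : ℝ × E3 | p.1 < W p.2} :=
  measurableSet_lt measurable_fst (hW.comp measurable_snd)

lemma lay_meas {W : E3 → ℝ} (hW : Measurable W) (J : Set ℝ) : Measurable (lay W J) := by
  unfold lay
  exact Measurable.lintegral_prod_left' (μ := volume.restrict J) (f := fun p : ℝ × E3 => _)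
    ((measurable_one).indicator (lay_set_meas hW))

lemma lay_total {W : E3 → ℝ} (y : E3) : lay W (Set.Ioi 0) y = ENNReal.ofReal (W y) := by
  unfold lay
  have : (fun t : ℝ => Set.indicator {p : ℝ × E3 | p.1 < W p.2} (1 : ℝ × E3 → ℝ≥0∞) (t, y)) =
      Set.indicator (Set.Iio (W y)) 1 := by
    ext t
    simp [Set.indicator]
  rw [this, lintegral_indicator_one measurableSet_Iio,
    Measure.restrict_apply measurableSet_Iio]
  rw [Set.inter_comm, Set.Ioi_inter_Iio]
  simp

lemma lay_split {W : E3 → ℝ} (J K : Set ℝ) (hK : MeasurableSet K)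
    (hd : Disjoint J K) (y : E3) : lay W (J ∪ K) y = lay W J y + lay W K y := by
  unfold lay
  exact lintegral_union hK hd

lemma lay_lintegral {W : E3 → ℝ} (hW : Measurable W) (J : Set ℝ) (g : E3 → ℝ≥0∞)
    (hg : Measurable g) :
    ∫⁻ y, lay W J y * g y = ∫⁻ t in J, ∫⁻ y in {y | t < W y}, g y := by
  have hm : Measurable (fun p : ℝ × E3 =>
      Set.indicator {p : ℝ × E3 | p.1 < W p.2} (1 : ℝ × E3 → ℝ≥0∞) p) :=
    (measurable_one).indicator (lay_set_meas hW)
  calc ∫⁻ y, lay W J y * g y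
      = ∫⁻ y, ∫⁻ t in J, Set.indicator {p : ℝ × E3 | p.1 < W p.2} 1 (t, y) * g y := by
        refine lintegral_congr fun y => ?_
        unfold lay
        rw [lintegral_mul_const]
        exact hm.comp (by fun_prop)
    _ = ∫⁻ t in J, ∫⁻ y, Set.indicator {p : ℝ × E3 | p.1 < W p.2} 1 (t, y) * g y := by
        rw [lintegral_lintegral_swap]
        refine Measurable.aemeasurable ?_
        exact (hm.comp measurable_swap).mul (hg.comp measurable_fst)
    _ = _ := by
        refine lintegral_congr fun t => ?_
        rw [← lintegral_indicator (measurableSet_lt measurable_const hW)]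
        refine lintegral_congr fun y => ?_
        by_cases h : t < W y <;> simp [Set.indicator, h]

/-- Dual form of the weak `L³` bound. -/
def WB (g : E3 → ℝ≥0∞) (M : ℝ≥0∞) : Prop :=
  ∀ B : Set E3, MeasurableSet B → ∫⁻ x in B, g x ≤ M * (volume B) ^ ((2 : ℝ) / 3)

/-- The size of the part of `W` with levels in `J`. -/
noncomputable def lsz (W : E3 → ℝ) (J : Set ℝ) : ℝ≥0∞ :=
  ∫⁻ t in J, (volume {y | t < W y}) ^ ((2 : ℝ) / 3)

lemma lay_WB {W : E3 → ℝ} (hW : Measurable W) (J : Set ℝ) (g : E3 → ℝ≥0∞)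
    (hg : Measurable g) (M : ℝ≥0∞) (hM : M ≠ ⊤) (h : WB g M) :
    ∫⁻ y, lay W J y * g y ≤ M * lsz W J := by
  rw [lay_lintegral hW J g hg, lsz, ← lintegral_const_mul' _ _ hM]
  exact lintegral_mono fun t => h _ (measurableSet_lt measurable_const hW)

/-- The integral operator. -/
noncomputable def top' (w g : E3 → ℝ≥0∞) (x : E3) : ℝ≥0∞ := ∫⁻ y, w y * g y * nk x y

lemma top'_meas {w g : E3 → ℝ≥0∞} (hw : Measurable w) (hg : Measurable g) :
    Measurable (top' w g) := by
  unfold top'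
  refine Measurable.lintegral_prod_right' (f := fun p : E3 × E3 => w p.2 * g p.2 * nk p.1 p.2) ?_
  exact ((hw.comp measurable_snd).mul (hg.comp measurable_snd)).mul nk_meas

lemma top'_WB {w g : E3 → ℝ≥0∞} (hw : Measurable w) (hg : Measurable g) :
    WB (top' w g) (nkC * ∫⁻ y, w y * g y) := by
  intro B hB
  unfold top'
  rw [lintegral_lintegral_swap]
  · calc ∫⁻ y, ∫⁻ x in B, w y * g y * nk x y
        = ∫⁻ y, w y * g y * ∫⁻ x in B, nk y x := by
          refine lintegral_congr fun y => ?_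
          rw [← lintegral_const_mul _ (nk_meas_left y)]
          simp_rw [nk_comm y]
      _ ≤ ∫⁻ y, w y * g y * (nkC * (volume B) ^ ((2 : ℝ) / 3)) := by
          refine lintegral_mono fun y => ?_
          gcongr
          exact nk_bound y B
      _ = _ := by
          rw [lintegral_mul_const _ (show Measurable fun y => w y * g y from hw.mul hg)]
          ring
  · exact (((hw.comp measurable_snd).mul (hg.comp measurable_snd)).mul nk_meas).aemeasurable

lemma nk_WB (x : E3) : WB (nk x) nkC := fun B _ => nk_bound x B

lemma iterate_step {W : E3 → ℝ} (hW : Measurable W) (J K : Set ℝ)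
    (u : E3 → ℝ≥0∞) (hu : Measurable u) (C : ℝ≥0∞) (hC : C ≠ ⊤) (huC : ∀ᵐ x, u x ≤ C)
    (hJ : ∫⁻ y, lay W J y ≠ ⊤) (hK : nkC * lsz W K ≤ 2⁻¹)
    (hle : ∀ᵐ x, u x ≤ top' (lay W J) u x + top' (lay W K) u x) :
    ∃ M : ℝ≥0∞, M ≠ ⊤ ∧ WB u M := by
  set M := nkC * ∫⁻ y, lay W J y * u y with hMdef
  have hM : M ≠ ⊤ := by
    refine ENNReal.mul_ne_top nkC_ne_top ?_
    refine ne_top_of_le_ne_top (ENNReal.mul_ne_top hJ hC) ?_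
    rw [← lintegral_mul_const _ (lay_meas hW J)]
    refine lintegral_mono_ae ?_
    filter_upwards [huC] with y hy
    gcongr
  have key : ∀ n : ℕ, ∃ g : E3 → ℝ≥0∞, Measurable g ∧ WB g (2 * M) ∧
      ∀ᵐ x, u x ≤ g x + C * 2⁻¹ ^ n := by
    intro n
    induction n with
    | zero =>
      refine ⟨0, measurable_zero, fun B _ => by simp, ?_⟩
      simpa using huC
    | succ n ih =>
      obtain ⟨g, hg, hgM, hug⟩ := ih
      refine ⟨fun x => top' (lay W J) u x + top' (lay W K) g x,
        (top'_meas (lay_meas hW J) hu).add (top'_meas (lay_meas hW K) hg), ?_, ?_⟩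
      · intro B hB
        rw [lintegral_add_left (top'_meas (lay_meas hW J) hu), two_mul, add_mul]
        refine add_le_add (top'_WB (lay_meas hW J) hu B hB) ?_
        refine (top'_WB (lay_meas hW K) hg B hB).trans ?_
        gcongr
        calc nkC * ∫⁻ y, lay W K y * g y ≤ nkC * (2 * M * lsz W K) := by
              gcongr
              exact lay_WB hW K g hg _ (ENNReal.mul_ne_top (by simp) hM) hgM
          _ = 2 * M * (nkC * lsz W K) := by ring
          _ ≤ 2 * M * 2⁻¹ := by gcongr
          _ = M := by
              rw [mul_comm 2 M, mul_assoc, ENNReal.mul_inv_cancel (by simp) (by simp), mul_one]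
      · filter_upwards [hle] with x hx
        refine hx.trans ?_
        rw [add_assoc]
        gcongr
        have hm : Measurable fun y => lay W K y * g y * nk x y :=
          ((lay_meas hW K).mul hg).mul (nk_meas_left x)
        calc top' (lay W K) u x
            ≤ ∫⁻ y, (lay W K y * g y * nk x y + C * 2⁻¹ ^ n * (lay W K y * nk x y)) := by
              unfold top'
              refine lintegral_mono_ae ?_
              filter_upwards [hug] with y hy
              calc lay W K y * u y * nk x y
                  ≤ lay W K y * (g y + C * 2⁻¹ ^ n) * nk x y := by gcongr
                _ = _ := by ring
          _ = top' (lay W K) g x + C * 2⁻¹ ^ n * ∫⁻ y, lay W K y * nk x y := by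
              rw [lintegral_add_left hm, lintegral_const_mul _
                (show Measurable fun y => lay W K y * nk x y from
                  (lay_meas hW K).mul (nk_meas_left x))]
              rfl
          _ ≤ top' (lay W K) g x + C * 2⁻¹ ^ n * 2⁻¹ := by
              gcongr
              exact (lay_WB hW K _ (nk_meas_left x) _ nkC_ne_top (nk_WB x)).trans hK
          _ = _ := by rw [pow_succ]; ring
  refine ⟨2 * M + 1, by simp [ENNReal.mul_ne_top, hM], fun B hB => ?_⟩
  by_cases hBt : volume B = ⊤
  · rw [hBt, ENNReal.top_rpow_of_pos (by norm_num), ENNReal.mul_top (by simp)]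
    exact le_top
  have h2 : ∫⁻ x in B, u x ≤ 2 * M * (volume B) ^ ((2 : ℝ) / 3) := by
    have hlim : Filter.Tendsto (fun n : ℕ => 2 * M * (volume B) ^ ((2 : ℝ) / 3) +
        C * 2⁻¹ ^ n * volume B) Filter.atTop
        (nhds (2 * M * (volume B) ^ ((2 : ℝ) / 3) + C * 0 * volume B)) := by
      refine Filter.Tendsto.add tendsto_const_nhds ?_
      refine ENNReal.Tendsto.mul_const (ENNReal.Tendsto.const_mul ?_ (Or.inr hC)) (Or.inr hBt)
      exact ENNReal.tendsto_pow_atTop_nhds_zero_of_lt_one (by simp)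
    simp only [mul_zero, zero_mul, add_zero] at hlim
    refine ge_of_tendsto' hlim fun n => ?_
    obtain ⟨g, hg, hgM, hug⟩ := key n
    calc ∫⁻ x in B, u x ≤ ∫⁻ x in B, (g x + C * 2⁻¹ ^ n) :=
          lintegral_mono_ae (ae_restrict_of_ae hug)
      _ = (∫⁻ x in B, g x) + C * 2⁻¹ ^ n * volume B := by
          rw [lintegral_add_left hg]; simp
      _ ≤ _ := by
          gcongr
          exact hgM B hB
  refine h2.trans ?_
  gcongr
  exact le_self_add

lemma exists_split {W : E3 → ℝ} (hW : Measurable W) (hfin : lsz W (Set.Ioi 0) ≠ ⊤)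
    (ε : ℝ≥0∞) (hε : 0 < ε) :
    ∃ J K : Set ℝ, MeasurableSet K ∧ Disjoint J K ∧ J ∪ K = Set.Ioi 0 ∧
      ∫⁻ y, lay W J y ≠ ⊤ ∧ lsz W K ≤ ε := by
  set F : ℝ → ℝ≥0∞ := fun t => (volume {y | t < W y}) ^ ((2 : ℝ) / 3) with hF
  have hanti : Antitone F := by
    intro s t hst
    simp only [hF]
    gcongr
  have hfinF : ∀ t, 0 < t → volume {y | t < W y} ≠ ⊤ := by
    intro t ht htop
    apply hfin
    rw [eq_top_iff]
    calc (⊤ : ℝ≥0∞) = ∫⁻ s in Set.Ioc 0 t, ⊤ := by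
          simp [ht]
      _ ≤ ∫⁻ s in Set.Ioc 0 t, F s := by
          refine setLIntegral_mono' measurableSet_Ioc fun s hs => ?_
          have := hanti hs.2
          refine le_trans ?_ this
          simp only [hF]
          rw [htop, ENNReal.top_rpow_of_pos (by norm_num)]
      _ ≤ lsz W (Set.Ioi 0) := lintegral_mono_set Set.Ioc_subset_Ioi_self
  let J : ℕ → Set ℝ := fun n => Set.Ioc ((n + 1 : ℝ)⁻¹) (n + 1)
  let K : ℕ → Set ℝ := fun n => Set.Ioi 0 \ J n
  have hJm : ∀ n, MeasurableSet (J n) := fun n => measurableSet_Ioc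
  have hKm : ∀ n, MeasurableSet (K n) := fun n => measurableSet_Ioi.diff (hJm n)
  have hKe : ⋂ n, K n = ∅ := by
    rw [Set.eq_empty_iff_forall_notMem]
    intro t ht
    rw [Set.mem_iInter] at ht
    have ht0 : 0 < t := (ht 0).1
    obtain ⟨n, hn⟩ := exists_nat_ge (max t t⁻¹)
    refine (ht n).2 ⟨?_, ?_⟩
    · rw [inv_lt_comm₀ (by positivity) ht0]
      linarith [le_max_right t t⁻¹]
    · linarith [le_max_left t t⁻¹]
  have hKanti : Antitone K := by
    intro m n hmn
    have : (m:ℝ) ≤ n := by exact_mod_cast hmn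
    refine Set.sdiff_subset_sdiff_right (Set.Ioc_subset_Ioc ?_ (by linarith))
    gcongr
  let ν := (volume.restrict (Set.Ioi (0:ℝ))).withDensity F
  have hν : ∀ n, ν (K n) = lsz W (K n) := by
    intro n
    simp only [ν]
    rw [withDensity_apply _ (hKm n), Measure.restrict_restrict (hKm n),
      Set.inter_eq_self_of_subset_left Set.sdiff_subset]
    rfl
  have hlim : Filter.Tendsto (fun n => ν (K n)) Filter.atTop (nhds (ν (⋂ n, K n))) := by
    refine tendsto_measure_iInter_atTop (fun n => (hKm n).nullMeasurableSet) hKanti ⟨0, ?_⟩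
    rw [hν]
    exact ne_top_of_le_ne_top hfin (lintegral_mono_set Set.sdiff_subset)
  rw [hKe, measure_empty] at hlim
  obtain ⟨n, hn⟩ := (hlim.eventually (ge_mem_nhds hε)).exists
  refine ⟨J n, K n, hKm n, Set.disjoint_sdiff_right, ?_, ?_, ?_⟩
  · refine Set.union_sdiff_cancel fun t ht => ?_
    have : (0:ℝ) < (n + 1 : ℝ)⁻¹ := by positivity
    exact this.trans ht.1
  · have := lay_lintegral hW (J n) 1 measurable_one
    simp only [Pi.one_apply, mul_one] at this
    rw [this]
    have h0 : (0:ℝ) < (n + 1 : ℝ)⁻¹ := by positivity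
    refine ne_top_of_le_ne_top (b := ∫⁻ t in J n, volume {y | (n + 1 : ℝ)⁻¹ < W y}) ?_ ?_
    · rw [setLIntegral_const]
      refine ENNReal.mul_ne_top (hfinF _ h0) ?_
      simp [J]
    · refine setLIntegral_mono' (hJm n) fun t ht => ?_
      simp only [lintegral_const, one_mul, MeasurableSet.univ, Measure.restrict_apply,
        Set.univ_inter]
      exact measure_mono fun y hy => ht.1.trans hy
  · rw [← hν]; exact hn

lemma WB_weak (φ : E3 → ℂ) (hφ : Measurable φ) (M : ℝ≥0∞) (hM : M ≠ ⊤)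
    (h : WB (fun x => ‖φ x‖ₑ) M) : MemWeakL3 φ := by
  unfold MemWeakL3 weakL3Norm
  refine lt_of_le_of_lt (iSup₂_le fun lam hlam => ?_) hM.lt_top
  set A := {x : E3 | lam < ‖φ x‖} with hA
  have hAm : MeasurableSet A := measurableSet_lt measurable_const hφ.norm
  have hlim : Filter.Tendsto (fun n : ℕ => ENNReal.ofReal lam *
      volume (A ∩ Metric.ball 0 n) ^ ((1:ℝ)/3)) Filter.atTop
      (nhds (ENNReal.ofReal lam * volume A ^ ((1:ℝ)/3))) := by
    refine ENNReal.Tendsto.const_mul ?_ (Or.inr ENNReal.ofReal_ne_top)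
    refine ((ENNReal.continuous_rpow_const (y := (1:ℝ)/3)).tendsto _).comp ?_
    have : A = ⋃ n : ℕ, A ∩ Metric.ball 0 n := by
      rw [← Set.inter_iUnion, Metric.iUnion_ball_nat, Set.inter_univ]
    nth_rewrite 2 [this]
    refine tendsto_measure_iUnion_atTop ?_
    intro m n hmn
    refine Set.inter_subset_inter_right _ (Metric.ball_subset_ball ?_)
    exact_mod_cast hmn
  refine le_of_tendsto' hlim fun n => ?_
  set B := A ∩ Metric.ball 0 n
  have hBm : MeasurableSet B := hAm.inter measurableSet_ball
  have hBt : volume B ≠ ⊤ :=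
    ne_top_of_le_ne_top measure_ball_lt_top.ne (measure_mono Set.inter_subset_right)
  by_cases hB0 : volume B = 0
  · simp [hB0]
  have h1 : ENNReal.ofReal lam * volume B ≤ M * volume B ^ ((2:ℝ)/3) := by
    refine le_trans ?_ (h B hBm)
    rw [← setLIntegral_const]
    refine setLIntegral_mono' hBm fun x hx => ?_
    rw [← ofReal_norm]
    exact ENNReal.ofReal_le_ofReal (le_of_lt hx.1)
  have h2 : volume B = volume B ^ ((1:ℝ)/3) * volume B ^ ((2:ℝ)/3) := by
    rw [← ENNReal.rpow_add _ _ hB0 hBt]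
    norm_num
  nth_rewrite 1 [h2] at h1
  rw [← mul_assoc] at h1
  refine (ENNReal.mul_le_mul_iff_left ?_ ?_).mp h1
  · simp [hB0, hBt]
  · simp [hB0, hBt]

/-- Lemma 2.1, forward direction: a bounded solution of `φ = -R₀(0)Vφ` lies in weak-`L³`. -/
theorem resonance_mem_weakL3 (V : E3 → ℝ) (hVmeas : Measurable V) (hV : MemL321 V)
    (φ : E3 → ℂ) (hφmeas : Measurable φ) (hφbdd : ∃ C : ℝ, ∀ᵐ x : E3 ∂volume, ‖φ x‖ ≤ C)
    (heq : ∀ᵐ x : E3 ∂volume,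
      Integrable (fun y : E3 => (V y : ℂ) * φ y / (‖x - y‖ : ℂ)) volume ∧
      φ x = -(1 / (4 * (Real.pi : ℂ))) * ∫ y : E3, (V y : ℂ) * φ y / (‖x - y‖ : ℂ)) :
    MemWeakL3 φ := by
  have hW : Measurable (fun y => ‖V y‖) := hVmeas.norm
  have hfin : lsz (fun y => ‖V y‖) (Set.Ioi 0) ≠ ⊤ := (show lorentzNorm321 V < ⊤ from hV).ne
  obtain ⟨J, K, hKm, hd, hun, hJ, hK⟩ := exists_split hW hfin (2⁻¹ * nkC⁻¹)
    (by
      rw [pos_iff_ne_zero]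
      exact mul_ne_zero (by simp) (ENNReal.inv_ne_zero.mpr nkC_ne_top))
  obtain ⟨C, hC⟩ := hφbdd
  have hu : Measurable (fun x => ‖φ x‖ₑ) := hφmeas.enorm
  obtain ⟨M, hM, hWB⟩ := iterate_step hW J K (fun x => ‖φ x‖ₑ) hu (ENNReal.ofReal C)
    ENNReal.ofReal_ne_top
    (by
      filter_upwards [hC] with x hx
      rw [← ofReal_norm]
      exact ENNReal.ofReal_le_ofReal hx)
    hJ
    (by
      calc nkC * lsz (fun y => ‖V y‖) K ≤ nkC * (2⁻¹ * nkC⁻¹) := by gcongr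
        _ = 2⁻¹ * (nkC * nkC⁻¹) := by ring
        _ = 2⁻¹ := by rw [ENNReal.mul_inv_cancel nkC_ne_zero nkC_ne_top, mul_one])
    (by
      filter_upwards [heq] with x hx
      have hpi : ‖-(1 / (4 * (Real.pi : ℂ)))‖ₑ ≤ 1 := by
        rw [← ofReal_norm]
        refine ENNReal.ofReal_le_one.mpr ?_
        rw [norm_neg, norm_div, norm_mul, Complex.norm_real, Real.norm_of_nonneg Real.pi_pos.le]
        norm_num
        have h3 := Real.pi_gt_three
        have h4 : Real.pi⁻¹ ≤ 1 := inv_le_one_of_one_le₀ (by linarith)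
        have h5 : 0 < Real.pi⁻¹ := by positivity
        linarith
      have hadd : top' (lay (fun y => ‖V y‖) J) (fun x => ‖φ x‖ₑ) x
          + top' (lay (fun y => ‖V y‖) K) (fun x => ‖φ x‖ₑ) x
          = ∫⁻ y, ENNReal.ofReal ‖V y‖ * ‖φ y‖ₑ * nk x y := by
        unfold top'
        rw [← lintegral_add_left
          (show Measurable fun y => lay (fun y => ‖V y‖) J y * (fun x => ‖φ x‖ₑ) y * nk x y from
            ((lay_meas hW J).mul hu).mul (nk_meas_left x))]
        refine lintegral_congr fun y => ?_
        rw [← lay_total (W := fun y => ‖V y‖) y, ← hun, lay_split J K hKm hd]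
        ring
      rw [hadd, hx.2, enorm_mul]
      refine (mul_le_mul' hpi (enorm_integral_le_lintegral_enorm _)).trans ?_
      rw [one_mul]
      refine le_of_eq (lintegral_congr fun y => ?_)
      rw [div_eq_mul_inv, enorm_mul, enorm_mul, nk, ← ofReal_norm (V y : ℂ),
        ← ofReal_norm ((‖x - y‖ : ℂ)⁻¹), norm_inv, Complex.norm_real, Complex.norm_real,
        norm_norm])
  exact WB_weak φ hφmeas M hM hWB
end

section
/- Let V : ℝ³ → ℝ be measurable with V ∈ L^{3/2,1}(ℝ³). Suppose φ : ℝ³ → ℂ is measurable with φ ∈ L^{3,∞}(ℝ³) and satisfies, for a.e. x ∈ ℝ³, that y ↦ V(y)φ(y)/‖x−y‖ is integrable and φ(x) = −(1/(4π)) ∫_{ℝ³} V(y)φ(y)/‖x−y‖ dy. Then φ is essentially bounded, i.e. φ ∈ L^∞(ℝ³). -/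
open MeasureTheory ENNReal

lemma aux_rpow_tail (a p : ℝ) (ha : 0 < a) (hp : p < -1) :
    ∫⁻ s in Set.Ioi a, ENNReal.ofReal (s ^ p) = ENNReal.ofReal (-a ^ (p + 1) / (p + 1)) := by
  rw [← integral_Ioi_rpow_of_lt hp ha, ofReal_integral_eq_lintegral_ofReal]
  · exact integrableOn_Ioi_rpow_of_lt hp ha
  · filter_upwards [ae_restrict_mem measurableSet_Ioi] with s hs
    exact Real.rpow_nonneg (ha.le.trans (le_of_lt hs)) _

/-- weak bound -/
lemma aux_weak {α : Type*} [NormedAddCommGroup α] (g : E3 → α) (A : ℝ) (hA : 0 < A)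
    (hg : weakL3Norm g ≤ ENNReal.ofReal A) (s : ℝ) (hs : 0 < s) :
    volume {x : E3 | s < ‖g x‖} ≤ ENNReal.ofReal (A ^ 3 * s ^ (-3 : ℝ)) := by
  have h1 : ENNReal.ofReal s * (volume {x : E3 | s < ‖g x‖}) ^ ((1 : ℝ) / 3)
      ≤ ENNReal.ofReal A := by
    refine le_trans ?_ hg
    unfold weakL3Norm
    exact le_iSup₂_of_le s hs le_rfl
  have hs0 : ENNReal.ofReal s ≠ 0 := by simpa using hs
  have h2 : (volume {x : E3 | s < ‖g x‖}) ^ ((1 : ℝ) / 3) ≤ ENNReal.ofReal (A / s) := by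
    rw [ENNReal.ofReal_div_of_pos hs]
    rw [ENNReal.le_div_iff_mul_le (Or.inl hs0) (Or.inl ENNReal.ofReal_ne_top), mul_comm]
    exact h1
  have h3 := ENNReal.rpow_le_rpow h2 (by norm_num : (0 : ℝ) ≤ 3)
  rw [← ENNReal.rpow_mul, ENNReal.ofReal_rpow_of_pos (by positivity)] at h3
  norm_num at h3
  refine h3.trans (le_of_eq ?_)
  congr 1
  rw [Real.rpow_neg hs.le]
  norm_cast
  field_simp

lemma aux_set {α : Type*} [NormedAddCommGroup α] [MeasurableSpace α] [BorelSpace α]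
    (g : E3 → α) (hgm : Measurable g) (A : ℝ) (hA : 0 < A)
    (hg : weakL3Norm g ≤ ENNReal.ofReal A) (S : Set E3) (hS : MeasurableSet S)
    (hfin : volume S ≠ ⊤) :
    ∫⁻ x in S, ‖g x‖ₑ ≤ ENNReal.ofReal (3 / 2 * A) * (volume S) ^ ((2 : ℝ) / 3) := by
  by_cases h0 : volume S = 0
  · rw [setLIntegral_measure_zero _ _ h0]; exact zero_le
  obtain ⟨m, hm⟩ : ∃ m : ℝ, m = (volume S).toReal := ⟨_, rfl⟩
  have hmS : volume S = ENNReal.ofReal m := by rw [hm, ENNReal.ofReal_toReal hfin]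
  have hm0 : 0 < m := by rw [hm]; exact ENNReal.toReal_pos h0 hfin
  obtain ⟨r, hr0, hr⟩ : ∃ r : ℝ, 0 < r ∧ r ^ 3 = m :=
    ⟨m ^ ((1 : ℝ) / 3), by positivity, by
      rw [← Real.rpow_natCast, ← Real.rpow_mul hm0.le]; norm_num⟩
  have hs0 : 0 < A / r := by positivity
  have key : ∫⁻ x in S, ‖g x‖ₑ = ∫⁻ t in Set.Ioi (0 : ℝ), (volume.restrict S) {x | t < ‖g x‖} := by
    rw [← lintegral_eq_lintegral_meas_lt]
    · simp_rw [ofReal_norm]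
    · exact Filter.Eventually.of_forall fun x => norm_nonneg _
    · exact hgm.norm.aemeasurable
  rw [key, ← Set.Ioc_union_Ioi_eq_Ioi hs0.le, lintegral_union measurableSet_Ioi]
  swap
  · rw [Set.disjoint_left]; intro x hx hx'; exact absurd hx.2 (not_le.2 hx')
  have e1 : ∫⁻ t in Set.Ioc 0 (A / r), (volume.restrict S) {x | t < ‖g x‖}
      ≤ ENNReal.ofReal (A * r ^ 2) := by
    calc _ ≤ ∫⁻ t in Set.Ioc 0 (A / r), volume S := by
          apply lintegral_mono; intro t
          exact (measure_mono (Set.subset_univ _)).trans (by simp)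
      _ = ENNReal.ofReal (A * r ^ 2) := by
          rw [setLIntegral_const, hmS, Real.volume_Ioc, ← ENNReal.ofReal_mul hm0.le]
          congr 1; rw [← hr]; field_simp; ring
  have e2 : ∫⁻ t in Set.Ioi (A / r), (volume.restrict S) {x | t < ‖g x‖}
      ≤ ENNReal.ofReal (A * r ^ 2 / 2) := by
    calc _ ≤ ∫⁻ t in Set.Ioi (A / r), ENNReal.ofReal (A ^ 3) * ENNReal.ofReal (t ^ (-3 : ℝ)) := by
          apply setLIntegral_mono' measurableSet_Ioi; intro t ht
          rw [← ENNReal.ofReal_mul (by positivity)]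
          exact (Measure.restrict_apply_le _ _).trans (aux_weak g A hA hg t (hs0.trans ht))
      _ = ENNReal.ofReal (A * r ^ 2 / 2) := by
          rw [lintegral_const_mul' _ _ ENNReal.ofReal_ne_top, aux_rpow_tail _ _ hs0 (by norm_num),
            ← ENNReal.ofReal_mul (by positivity)]
          congr 1
          norm_num
          field_simp
  refine (add_le_add e1 e2).trans (le_of_eq ?_)
  rw [hmS, ENNReal.ofReal_rpow_of_pos hm0, ← ENNReal.ofReal_add (by positivity) (by positivity),
    ← ENNReal.ofReal_mul (by positivity)]
  congr 1
  have : m ^ ((2 : ℝ) / 3) = r ^ 2 := by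
    rw [← hr, ← Real.rpow_natCast, ← Real.rpow_mul hr0.le, ← Real.rpow_natCast]; norm_num
  rw [this]; ring

lemma aux_fin {α : Type*} [NormedAddCommGroup α] (f : E3 → α) (hf : lorentzNorm321 f ≠ ⊤)
    (t : ℝ) (ht : 0 < t) : volume {x : E3 | t < ‖f x‖} ≠ ⊤ := by
  intro h
  apply hf
  rw [eq_top_iff]
  unfold lorentzNorm321
  calc (⊤ : ℝ≥0∞) = ∫⁻ s in Set.Ioc 0 t, (⊤ : ℝ≥0∞) := by
        rw [setLIntegral_const, Real.volume_Ioc, ENNReal.top_mul]; simpa using ht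
    _ ≤ ∫⁻ s in Set.Ioc 0 t, (volume {x : E3 | s < ‖f x‖}) ^ ((2 : ℝ) / 3) := by
        apply setLIntegral_mono' measurableSet_Ioc; intro s hs
        have : volume {x : E3 | s < ‖f x‖} = ⊤ := by
          rw [eq_top_iff, ← h]
          exact measure_mono fun x hx => lt_of_le_of_lt hs.2 hx
        rw [this, ENNReal.top_rpow_of_pos (by norm_num)]
    _ ≤ _ := lintegral_mono_set Set.Ioc_subset_Ioi_self

lemma aux_holder {α β : Type*} [NormedAddCommGroup α] [MeasurableSpace α] [BorelSpace α]
    [NormedAddCommGroup β] [MeasurableSpace β] [BorelSpace β]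
    (f : E3 → α) (hfm : Measurable f) (hf : lorentzNorm321 f ≠ ⊤)
    (g : E3 → β) (hgm : Measurable g) (A : ℝ) (hA : 0 < A)
    (hg : weakL3Norm g ≤ ENNReal.ofReal A) :
    ∫⁻ x, ‖f x‖ₑ * ‖g x‖ₑ ≤ ENNReal.ofReal (3 / 2 * A) * lorentzNorm321 f := by
  have h1 : ∫⁻ x, ‖f x‖ₑ * ‖g x‖ₑ
      = ∫⁻ x, ENNReal.ofReal ‖f x‖ ∂(volume.withDensity fun x => ‖g x‖ₑ) := by
    rw [lintegral_withDensity_eq_lintegral_mul _ hgm.enorm hfm.norm.ennreal_ofReal]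
    simp_rw [Pi.mul_apply, ofReal_norm, mul_comm]
  rw [h1, lintegral_eq_lintegral_meas_lt _ (Filter.Eventually.of_forall fun x => norm_nonneg _)
    hfm.norm.aemeasurable]
  unfold lorentzNorm321
  rw [← lintegral_const_mul' _ _ ENNReal.ofReal_ne_top]
  apply setLIntegral_mono' measurableSet_Ioi
  intro t ht
  have hm : MeasurableSet {x : E3 | t < ‖f x‖} := measurableSet_lt measurable_const hfm.norm
  rw [withDensity_apply _ hm]
  exact aux_set g hgm A hA hg _ hm (aux_fin f hf t ht)

lemma aux_local {α : Type*} [NormedAddCommGroup α] 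
    (g : E3 → α) (A : ℝ) (hA : 0 < A)
    (hg : weakL3Norm g ≤ ENNReal.ofReal A) (S : Set E3)
    (hfin : volume S ≠ ⊤) : lorentzNorm321 (S.indicator g) ≠ ⊤ := by
  unfold lorentzNorm321
  rw [← Set.Ioc_union_Ioi_eq_Ioi zero_le_one, lintegral_union measurableSet_Ioi]
  swap
  · rw [Set.disjoint_left]; intro x hx hx'; exact absurd hx.2 (not_le.2 hx')
  refine ENNReal.add_ne_top.2 ⟨?_, ?_⟩
  · refine ne_top_of_le_ne_top (b := ∫⁻ t in Set.Ioc (0 : ℝ) 1, (volume S) ^ ((2 : ℝ) / 3)) ?_ ?_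
    · rw [setLIntegral_const]
      exact ENNReal.mul_ne_top (ENNReal.rpow_ne_top_of_nonneg (by norm_num) hfin) (by simp)
    · apply setLIntegral_mono' measurableSet_Ioc; intro t ht
      refine ENNReal.rpow_le_rpow (measure_mono fun x hx => ?_) (by norm_num)
      by_contra hxS
      simp [Set.indicator_of_notMem hxS] at hx
      linarith [ht.1]
  · refine ne_top_of_le_ne_top
      (b := ∫⁻ t in Set.Ioi (1 : ℝ), ENNReal.ofReal (A ^ 2) * ENNReal.ofReal (t ^ (-2 : ℝ))) ?_ ?_
    · rw [lintegral_const_mul' _ _ ENNReal.ofReal_ne_top, aux_rpow_tail _ _ one_pos (by norm_num)]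
      exact ENNReal.mul_ne_top ENNReal.ofReal_ne_top ENNReal.ofReal_ne_top
    · apply setLIntegral_mono' measurableSet_Ioi; intro t ht
      have ht0 : 0 < t := one_pos.trans ht
      have h1 : volume {x : E3 | t < ‖S.indicator g x‖} ≤ ENNReal.ofReal (A ^ 3 * t ^ (-3 : ℝ)) :=
        (measure_mono fun x hx => lt_of_lt_of_le hx (norm_indicator_le_norm_self g x)).trans
          (aux_weak g A hA hg t ht0)
      refine (ENNReal.rpow_le_rpow h1 (by norm_num)).trans (le_of_eq ?_)
      rw [ENNReal.ofReal_rpow_of_pos (by positivity), ← ENNReal.ofReal_mul (by positivity)]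
      congr 1
      rw [Real.mul_rpow (by positivity) (by positivity), ← Real.rpow_mul ht0.le,
        ← Real.rpow_natCast, ← Real.rpow_mul hA.le, ← Real.rpow_natCast]
      norm_num

lemma aux_kernel : ∃ A : ℝ, 0 < A ∧ ∀ x : E3,
    weakL3Norm (fun y : E3 => (‖x - y‖⁻¹ : ℝ)) ≤ ENNReal.ofReal A := by
  obtain ⟨c, hc⟩ : ∃ c : ℝ, c = (volume (Metric.ball (0 : E3) 1)).toReal := ⟨_, rfl⟩
  have hcV : volume (Metric.ball (0 : E3) 1) = ENNReal.ofReal c := by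
    rw [hc, ENNReal.ofReal_toReal measure_ball_lt_top.ne]
  have hc0 : 0 < c := by
    rw [hc]; exact ENNReal.toReal_pos (Metric.measure_ball_pos _ _ one_pos).ne'
      measure_ball_lt_top.ne
  refine ⟨c ^ ((1 : ℝ) / 3), by positivity, fun x => ?_⟩
  unfold weakL3Norm
  refine iSup₂_le fun s hs => ?_
  have hsub : {y : E3 | s < ‖(‖x - y‖⁻¹ : ℝ)‖} ⊆ Metric.ball x s⁻¹ := by
    intro y hy
    simp only [Set.mem_ofPred_eq, norm_inv, norm_norm] at hy
    rw [Metric.mem_ball, dist_comm, dist_eq_norm]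
    have : 0 < ‖x - y‖ := by
      by_contra h
      have : ‖x - y‖ = 0 := le_antisymm (not_lt.1 h) (norm_nonneg _)
      rw [this] at hy; simp at hy; linarith
    rwa [lt_inv_comm₀ this hs]
  have h1 : volume {y : E3 | s < ‖(‖x - y‖⁻¹ : ℝ)‖} ≤ ENNReal.ofReal (s⁻¹ ^ 3 * c) := by
    refine (measure_mono hsub).trans (le_of_eq ?_)
    rw [Measure.addHaar_ball _ _ (by positivity), hcV, ENNReal.ofReal_mul (by positivity)]
    simp
  calc _ ≤ ENNReal.ofReal s * ENNReal.ofReal (s⁻¹ ^ 3 * c) ^ ((1 : ℝ) / 3) := by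
        gcongr
    _ = _ := by
        rw [ENNReal.ofReal_rpow_of_pos (by positivity), ← ENNReal.ofReal_mul hs.le]
        congr 1
        rw [Real.mul_rpow (by positivity) hc0.le, ← Real.rpow_natCast, ← Real.rpow_mul (by positivity)]
        norm_num
        field_simp

/-- middle level sets -/
def midSet (V : E3 → ℝ) (n : ℕ) : Set E3 := {x | 1 / ((n : ℝ) + 1) < ‖V x‖ ∧ ‖V x‖ ≤ n}

lemma aux_split (V : E3 → ℝ) (hVm : Measurable V) (hV : lorentzNorm321 V ≠ ⊤) :
    Filter.Tendsto (fun n => lorentzNorm321 ((midSet V n)ᶜ.indicator V)) Filter.atTop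
      (nhds 0) := by
  unfold lorentzNorm321
  have hanti : ∀ f : E3 → ℝ, Measurable
      fun t : ℝ => (volume {x : E3 | t < ‖f x‖}) ^ ((2 : ℝ) / 3) := by
    intro f
    apply Antitone.measurable
    intro s t hst
    exact ENNReal.rpow_le_rpow (measure_mono fun x hx => lt_of_le_of_lt hst hx) (by norm_num)
  rw [← lintegral_zero (μ := volume.restrict (Set.Ioi (0 : ℝ)))]
  refine tendsto_lintegral_of_dominated_convergence
    (fun t : ℝ => (volume {x : E3 | t < ‖V x‖}) ^ ((2 : ℝ) / 3)) (fun n => hanti _) ?_ hV ?_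
  · intro n
    filter_upwards with t
    exact ENNReal.rpow_le_rpow (measure_mono fun x hx =>
      lt_of_lt_of_le hx (norm_indicator_le_norm_self V x)) (by norm_num)
  · filter_upwards [ae_restrict_mem measurableSet_Ioi] with t ht
    have ht : 0 < t := ht
    have h1 : Filter.Tendsto (fun n : ℕ => volume {x : E3 | (n : ℝ) < ‖V x‖}) Filter.atTop
        (nhds 0) := by
      have h := tendsto_measure_iInter_atTop (μ := (volume : Measure E3))
        (s := fun n : ℕ => {x : E3 | (n : ℝ) < ‖V x‖})
        (fun n => (measurableSet_lt measurable_const hVm.norm).nullMeasurableSet)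
        (fun m n hmn x hx => lt_of_le_of_lt (Nat.cast_le.2 hmn : (m : ℝ) ≤ n) hx)
        ⟨1, by simpa using aux_fin V hV 1 one_pos⟩
      have hempty : ⋂ n : ℕ, {x : E3 | (n : ℝ) < ‖V x‖} = ∅ := by
        ext x
        simp only [Set.mem_iInter, Set.mem_ofPred_eq, Set.mem_empty_iff_false, iff_false, not_forall,
          not_lt]
        exact exists_nat_ge _
      rwa [hempty, measure_empty] at h
    have h2 : Filter.Tendsto (fun n : ℕ => (volume {x : E3 | (n : ℝ) < ‖V x‖}) ^ ((2 : ℝ) / 3))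
        Filter.atTop (nhds 0) := by
      have := h1.ennrpow_const ((2 : ℝ) / 3)
      rwa [ENNReal.zero_rpow_of_pos (by norm_num)] at this
    refine tendsto_of_tendsto_of_tendsto_of_le_of_le' tendsto_const_nhds h2
      (Filter.Eventually.of_forall fun n => zero_le) ?_
    obtain ⟨N, hN⟩ := exists_nat_one_div_lt ht
    filter_upwards [Filter.eventually_ge_atTop N] with n hn
    refine ENNReal.rpow_le_rpow (measure_mono fun x hx => ?_) (by norm_num)
    simp only [Set.mem_ofPred_eq] at hx ⊢
    by_cases hxS : x ∈ midSet V n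
    · simp [hxS] at hx; linarith
    · rw [Set.indicator_of_mem hxS] at hx
      by_contra hcon
      apply hxS
      refine ⟨lt_trans (lt_of_le_of_lt ?_ hN) hx, not_lt.1 hcon⟩
      apply one_div_le_one_div_of_le (by positivity)
      have : (N : ℝ) ≤ n := by exact_mod_cast hn
      linarith

/-- Abstract absorption argument. -/
lemma aux_absorb (U W : E3 → ℝ≥0∞) (hU : Measurable U) (hW : Measurable W)
    (k : E3 → E3 → ℝ≥0∞) (hk : Measurable (Function.uncurry k)) (hsymm : ∀ x y, k x y = k y x)
    (G : ℝ≥0∞) (hfin : ∫⁻ x, W x * U x ≠ ⊤)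
    (hK : ∀ x, ∫⁻ y, W y * k x y ≤ 1 / 2)
    (h : ∀ᵐ x, U x ≤ G + ∫⁻ y, W y * U y * k x y) :
    ∀ᵐ x, U x ≤ 2 * G := by
  set v : E3 → ℝ≥0∞ := fun x => U x - 2 * G with hv
  have hvm : Measurable v := hU.sub_const _
  have hkx : ∀ x, Measurable (k x) := fun x => hk.of_uncurry_left
  have hWk : ∀ x, Measurable fun y => W y * k x y := fun x => hW.mul (hkx x)
  have hWvk : ∀ x, Measurable fun y => W y * v y * k x y := fun x => (hW.mul hvm).mul (hkx x)
  have hvK : ∀ᵐ x, v x ≤ ∫⁻ y, W y * v y * k x y := by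
    filter_upwards [h] with x hx
    rw [hv]
    simp only
    rw [tsub_le_iff_left]
    calc U x ≤ G + ∫⁻ y, W y * U y * k x y := hx
      _ ≤ G + ∫⁻ y, (2 * G * (W y * k x y) + W y * v y * k x y) := by
          gcongr with y
          calc W y * U y * k x y ≤ W y * (2 * G + v y) * k x y := by
                gcongr; exact le_add_tsub
            _ = _ := by ring
      _ = G + (2 * G * ∫⁻ y, W y * k x y) + ∫⁻ y, W y * v y * k x y := by
          rw [lintegral_add_left ((hWk x).const_mul _),
            lintegral_const_mul _ (hWk x), add_assoc]
      _ ≤ G + (2 * G * (1 / 2)) + ∫⁻ y, W y * v y * k x y := by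
          gcongr; exact hK x
      _ = _ := by
          congr 1
          rw [mul_comm 2 G, mul_assoc, one_div, ENNReal.mul_inv_cancel (by simp) (by simp)]
          ring
  have hI : ∫⁻ x, W x * v x ≤ (∫⁻ x, W x * v x) * (1 / 2) := by
    calc ∫⁻ x, W x * v x ≤ ∫⁻ x, W x * ∫⁻ y, W y * v y * k x y := by
          apply lintegral_mono_ae
          filter_upwards [hvK] with x hx
          gcongr
      _ = ∫⁻ x, ∫⁻ y, W x * (W y * v y * k x y) := by
          congr 1; ext x
          rw [lintegral_const_mul _ (hWvk x)]
      _ = ∫⁻ y, ∫⁻ x, W x * (W y * v y * k x y) := by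
          apply lintegral_lintegral_swap
          apply Measurable.aemeasurable
          exact (hW.comp measurable_fst).mul
            (((hW.mul hvm).comp measurable_snd).mul hk)
      _ = ∫⁻ y, W y * v y * ∫⁻ x, W x * k y x := by
          congr 1; ext y
          rw [← lintegral_const_mul _ (hWk y)]
          congr 1; ext x
          rw [hsymm x y]; ring
      _ ≤ ∫⁻ y, W y * v y * (1 / 2) := by
          gcongr with y; exact hK y
      _ = _ := lintegral_mul_const _ (hW.mul hvm)
  have hIfin : ∫⁻ x, W x * v x ≠ ⊤ := by
    refine ne_top_of_le_ne_top hfin (lintegral_mono fun x => ?_)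
    exact mul_le_mul_right tsub_le_self _
  have hI0 : ∫⁻ x, W x * v x = 0 := by
    by_contra hne
    have := ENNReal.half_lt_self hne hIfin
    rw [ENNReal.div_eq_inv_mul, mul_comm, ← one_div] at this
    exact absurd hI (not_le.2 this)
  have hWv : ∀ᵐ y, W y * v y = 0 := (lintegral_eq_zero_iff (hW.mul hvm)).1 hI0
  filter_upwards [hvK] with x hx
  have : ∫⁻ y, W y * v y * k x y = 0 := by
    rw [lintegral_eq_zero_iff (hWvk x)]
    filter_upwards [hWv] with y hy
    simp [hy]
  rw [this] at hx
  exact tsub_eq_zero_iff_le.1 (le_antisymm hx (zero_le))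

/-- Lemma 2.1, converse direction: a weak-`L³` solution of `φ = -R₀(0)Vφ` is essentially
bounded. -/
theorem resonance_essentially_bounded (V : E3 → ℝ) (hVmeas : Measurable V) (hV : MemL321 V)
    (φ : E3 → ℂ) (hφmeas : Measurable φ) (hφ : MemWeakL3 φ)
    (heq : ∀ᵐ x : E3 ∂volume,
      Integrable (fun y : E3 => (V y : ℂ) * φ y / (‖x - y‖ : ℂ)) volume ∧
      φ x = -(1 / (4 * (Real.pi : ℂ))) * ∫ y : E3, (V y : ℂ) * φ y / (‖x - y‖ : ℂ)) :
    ∃ C : ℝ, ∀ᵐ x : E3 ∂volume, ‖φ x‖ ≤ C := by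
  have hV' : lorentzNorm321 V ≠ ⊤ := hV.ne
  obtain ⟨B, hB0, hB⟩ : ∃ B : ℝ, 0 < B ∧ weakL3Norm φ ≤ ENNReal.ofReal B := by
    refine ⟨(weakL3Norm φ).toReal + 1, by positivity, ?_⟩
    calc weakL3Norm φ = ENNReal.ofReal (weakL3Norm φ).toReal :=
          (ENNReal.ofReal_toReal (ne_of_lt hφ)).symm
      _ ≤ _ := ENNReal.ofReal_le_ofReal (by linarith)
  obtain ⟨A, hA0, hA⟩ := aux_kernel
  have hkm : ∀ x : E3, Measurable (fun y : E3 => (‖x - y‖⁻¹ : ℝ)) := fun x => by fun_prop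
  -- choose the splitting level
  obtain ⟨n, hn⟩ : ∃ n, ENNReal.ofReal (3 / 2 * A) *
      lorentzNorm321 ((midSet V n)ᶜ.indicator V) ≤ 1 / 2 := by
    have h := ENNReal.Tendsto.const_mul (a := ENNReal.ofReal (3 / 2 * A))
      (aux_split V hVmeas hV') (Or.inr ENNReal.ofReal_ne_top)
    rw [mul_zero] at h
    exact (h.eventually (ge_mem_nhds (by simp : (0 : ℝ≥0∞) < 1 / 2))).exists
  set S := midSet V n with hSdef
  have hS : MeasurableSet S :=
    (measurableSet_lt measurable_const hVmeas.norm).inter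
      (measurableSet_le hVmeas.norm measurable_const)
  have hSfin : volume S ≠ ⊤ :=
    ne_top_of_le_ne_top (aux_fin V hV' (1 / ((n : ℝ) + 1)) (by positivity))
      (measure_mono fun x hx => hx.1)
  set V2 := Sᶜ.indicator V with hV2
  have hV2m : Measurable V2 := hVmeas.indicator hS.compl
  have hV2fin : lorentzNorm321 V2 ≠ ⊤ := by
    intro htop
    rw [htop, ENNReal.mul_top (by simpa using hA0)] at hn
    simp at hn
  set f := S.indicator φ with hf
  have hfm : Measurable f := hφmeas.indicator hS
  have hffin : lorentzNorm321 f ≠ ⊤ := aux_local φ B hB0 hB S hSfin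
  set G : ℝ≥0∞ := n * (ENNReal.ofReal (3 / 2 * A) * lorentzNorm321 f) with hG
  have hGfin : G ≠ ⊤ := ENNReal.mul_ne_top (by simp) (ENNReal.mul_ne_top ENNReal.ofReal_ne_top hffin)
  set k : E3 → E3 → ℝ≥0∞ := fun x y => ‖(‖x - y‖⁻¹ : ℝ)‖ₑ with hk
  have hmain : ∀ᵐ x, ‖φ x‖ₑ ≤ 2 * G := by
    refine aux_absorb (fun x => ‖φ x‖ₑ) (fun x => ‖V2 x‖ₑ) hφmeas.enorm hV2m.enorm k ?_ ?_ G ?_ ?_ ?_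
    · rw [hk]; unfold Function.uncurry; simp only; fun_prop
    · intro x y; simp only [hk]; rw [norm_sub_rev]
    · refine ne_top_of_le_ne_top ?_ (aux_holder V2 hV2m hV2fin φ hφmeas B hB0 hB)
      exact ENNReal.mul_ne_top ENNReal.ofReal_ne_top hV2fin
    · intro x
      exact (aux_holder V2 hV2m hV2fin _ (hkm x) A hA0 (hA x)).trans hn
    · filter_upwards [heq] with x hx
      have hc : ‖-(1 / (4 * (Real.pi : ℂ)))‖ₑ ≤ 1 := by
        rw [← ofReal_norm, ENNReal.ofReal_le_one]
        rw [norm_neg, norm_div, norm_mul, Complex.norm_real, Real.norm_of_nonneg Real.pi_pos.le]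
        simp only [norm_one, Complex.norm_ofNat]
        rw [div_le_one (by positivity)]
        linarith [Real.pi_gt_three]
      calc ‖φ x‖ₑ ≤ ∫⁻ y, ‖(V y : ℂ) * φ y / (‖x - y‖ : ℂ)‖ₑ := by
            rw [hx.2, enorm_mul]
            calc _ ≤ 1 * ‖∫ y : E3, (V y : ℂ) * φ y / (‖x - y‖ : ℂ)‖ₑ := by gcongr
              _ ≤ _ := by rw [one_mul]; exact enorm_integral_le_lintegral_enorm _
        _ ≤ ∫⁻ y, (n * (‖f y‖ₑ * k x y) + ‖V2 y‖ₑ * ‖φ y‖ₑ * k x y) := by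
            apply lintegral_mono
            intro y
            have e : ‖(V y : ℂ) * φ y / (‖x - y‖ : ℂ)‖ₑ = ‖V y‖ₑ * ‖φ y‖ₑ * k x y := by
              simp only [hk]
              rw [div_eq_mul_inv, enorm_mul, enorm_mul, ← Complex.ofReal_inv]
              simp only [← ofReal_norm, Complex.norm_real]
            simp only [e]
            by_cases hy : y ∈ S
            · refine le_add_right ?_
              rw [hf, Set.indicator_of_mem hy, ← mul_assoc]
              gcongr
              rw [← ofReal_norm]
              exact ENNReal.ofReal_le_of_le_toReal (by simpa using hy.2)
            · refine le_add_left ?_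
              rw [hV2, Set.indicator_of_mem (show y ∈ Sᶜ from hy)]
        _ = n * (∫⁻ y, ‖f y‖ₑ * k x y) + ∫⁻ y, ‖V2 y‖ₑ * ‖φ y‖ₑ * k x y := by
            have hm : Measurable fun y => ‖f y‖ₑ * k x y := hfm.enorm.mul (hkm x).enorm
            rw [lintegral_add_left (hm.const_mul _), lintegral_const_mul _ hm]
        _ ≤ G + ∫⁻ y, ‖V2 y‖ₑ * ‖φ y‖ₑ * k x y := by
            rw [hG]
            gcongr
            exact aux_holder f hfm hffin _ (hkm x) A hA0 (hA x)
  refine ⟨(2 * G).toReal, ?_⟩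
  filter_upwards [hmain] with x hx
  have h2 : 2 * G ≠ ⊤ := ENNReal.mul_ne_top (by simp) hGfin
  have := ENNReal.toReal_mono h2 hx
  simpa using this
end

section
/- Let V : ℝ³ → ℝ be measurable with V ∈ L^{3/2,1}(ℝ³), and let φ ∈ 𝓜, i.e. φ : ℝ³ → ℂ is essentially bounded and satisfies for a.e. x that y ↦ V(y)φ(y)/‖x−y‖ is integrable and φ(x) = −(1/(4π)) ∫_{ℝ³} V(y)φ(y)/‖x−y‖ dy. Then V·|φ|² is integrable, ∫_{ℝ³} V(x)|φ(x)|² dx ≤ 0, and if ∫_{ℝ³} V(x)|φ(x)|² dx = 0 then φ = 0 almost everywhere. -/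
open MeasureTheory ENNReal

/-- Coulomb kernel with values in `ℝ≥0∞` -/
noncomputable def kerC (x y : E3) : ℝ≥0∞ := ENNReal.ofReal (‖x - y‖⁻¹)

lemma kerC_comm (x y : E3) : kerC x y = kerC y x := by
  unfold kerC; rw [norm_sub_rev]

lemma measurable_kerC : Measurable (fun p : E3 × E3 => kerC p.1 p.2) := by
  unfold kerC; fun_prop

lemma measurable_kerC_right (x : E3) : Measurable (fun y : E3 => kerC x y) := by
  unfold kerC; fun_prop

lemma kerC_set_bound : ∃ c : ℝ≥0∞, c ≠ ⊤ ∧ ∀ (x : E3) (A : Set E3), MeasurableSet A →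
    ∫⁻ y in A, kerC x y ≤ c * (volume A) ^ ((2 : ℝ) / 3) := by
  set b : ℝ≥0∞ := volume (Metric.ball (0 : E3) 1) with hb
  have hbt : b ≠ ⊤ := measure_ball_lt_top.ne
  refine ⟨1 + b, by simp [hbt], fun x A hA => ?_⟩
  by_cases h0 : volume A = 0
  · rw [Measure.restrict_eq_zero.mpr h0]; simp
  by_cases ht : volume A = ⊤
  · rw [ht, ENNReal.top_rpow_of_pos (by norm_num), ENNReal.mul_top (by simp)]; exact le_top
  obtain ⟨a, ha0, ha⟩ : ∃ a : ℝ, 0 < a ∧ volume A = ENNReal.ofReal a :=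
    ⟨(volume A).toReal, ENNReal.toReal_pos h0 ht, (ENNReal.ofReal_toReal ht).symm⟩
  set T : ℝ := a ^ (-(1 : ℝ) / 3) with hT
  have hT0 : 0 < T := by positivity
  unfold kerC
  rw [lintegral_eq_lintegral_meas_lt (volume.restrict A) (Filter.Eventually.of_forall fun y => by
    simp) (by fun_prop)]
  rw [← Set.Ioc_union_Ioi_eq_Ioi hT0.le]
  refine (lintegral_union_le _ _ _).trans ?_
  rw [add_mul]
  refine add_le_add ?_ ?_
  · calc ∫⁻ t in Set.Ioc 0 T, (volume.restrict A) {y | t < ‖x - y‖⁻¹}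
        ≤ ∫⁻ t in Set.Ioc 0 T, volume A := by
          refine lintegral_mono fun t => ?_
          refine (measure_mono (Set.subset_univ _)).trans (by simp)
      _ = ENNReal.ofReal a * ENNReal.ofReal T := by simp [ha]
      _ = 1 * volume A ^ ((2:ℝ)/3) := by
          rw [← ENNReal.ofReal_mul ha0.le, one_mul, ha, ENNReal.ofReal_rpow_of_pos ha0]
          congr 1
          nth_rw 1 [← Real.rpow_one a]
          rw [hT, ← Real.rpow_add ha0]; norm_num
  · calc ∫⁻ t in Set.Ioi T, (volume.restrict A) {y | t < ‖x - y‖⁻¹}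
        ≤ ∫⁻ t in Set.Ioi T, b * ENNReal.ofReal (t ^ (-3 : ℝ)) := by
          refine setLIntegral_mono' measurableSet_Ioi fun t ht => ?_
          have ht0 : 0 < t := hT0.trans ht
          refine (Measure.restrict_apply_le _ _).trans ?_
          have : {y : E3 | t < ‖x - y‖⁻¹} ⊆ Metric.ball x t⁻¹ := by
            intro y hy
            simp only [Set.mem_ofPred_eq] at hy
            rw [Metric.mem_ball, dist_comm, dist_eq_norm]
            exact (lt_inv_comm₀ ht0 (inv_pos.mp (ht0.trans hy))).mp hy
          refine (measure_mono this).trans ?_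
          rw [Measure.addHaar_ball _ _ (by positivity), mul_comm, ← hb]
          simp only [finrank_euclideanSpace, Fintype.card_fin]
          rw [Real.rpow_neg ht0.le, inv_pow]
          norm_cast
      _ = b * ENNReal.ofReal (T ^ (-2 : ℝ) / 2) := by
          rw [lintegral_const_mul _ (by fun_prop)]
          rw [← ofReal_integral_eq_lintegral_ofReal (integrableOn_Ioi_rpow_of_lt (by norm_num) hT0),
            integral_Ioi_rpow_of_lt (by norm_num) hT0]
          · norm_num
          · filter_upwards [ae_restrict_mem measurableSet_Ioi] with t ht
            exact Real.rpow_nonneg (hT0.trans ht).le _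
      _ ≤ b * volume A ^ ((2:ℝ)/3) := by
          gcongr
          rw [ha, ENNReal.ofReal_rpow_of_pos ha0]
          gcongr
          rw [hT, ← Real.rpow_mul ha0.le]
          norm_num
          have : 0 < a ^ ((2:ℝ)/3) := by positivity
          linarith

/-- layer piece of `|V|` -/
noncomputable def layer (V : E3 → ℝ) (S : Set ℝ) (y : E3) : ℝ≥0∞ :=
  ∫⁻ l in S, Set.indicator {p : ℝ × E3 | p.1 < ‖V p.2‖} 1 (l, y)

lemma measurableSet_layer {V : E3 → ℝ} (hV : Measurable V) :
    MeasurableSet {p : ℝ × E3 | p.1 < ‖V p.2‖} :=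
  measurableSet_lt (by fun_prop) (by fun_prop)

lemma measurable_layer_ind {V : E3 → ℝ} (hV : Measurable V) :
    Measurable (Set.indicator {p : ℝ × E3 | p.1 < ‖V p.2‖} (1 : ℝ × E3 → ℝ≥0∞)) :=
  measurable_one.indicator (measurableSet_layer hV)

lemma measurable_layer {V : E3 → ℝ} (hV : Measurable V) (S : Set ℝ) : Measurable (layer V S) := by
  unfold layer
  exact Measurable.lintegral_prod_left' (measurable_layer_ind hV)

lemma layer_Ioi {V : E3 → ℝ} (y : E3) : layer V (Set.Ioi 0) y = ‖V y‖ₑ := by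
  unfold layer
  have : (fun l : ℝ => Set.indicator {p : ℝ × E3 | p.1 < ‖V p.2‖} (1 : ℝ × E3 → ℝ≥0∞) (l, y))
      = Set.indicator (Set.Iio ‖V y‖) 1 := by
    ext l; simp [Set.indicator]
  rw [this, lintegral_indicator_one measurableSet_Iio, Measure.restrict_apply measurableSet_Iio,
    Set.inter_comm, Set.Ioi_inter_Iio]
  simp [Real.enorm_eq_ofReal_abs]

lemma layer_lintegral {V : E3 → ℝ} (hV : Measurable V) (S : Set ℝ) (w : E3 → ℝ≥0∞)
    (hw : Measurable w) :
    ∫⁻ y, w y * layer V S y = ∫⁻ l in S, ∫⁻ y in {y | l < ‖V y‖}, w y := by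
  unfold layer
  have h1 : ∀ y, w y * ∫⁻ l in S, Set.indicator {p : ℝ × E3 | p.1 < ‖V p.2‖} 1 (l, y)
      = ∫⁻ l in S, w y * Set.indicator {p : ℝ × E3 | p.1 < ‖V p.2‖} 1 (l, y) := fun y => by
    rw [lintegral_const_mul]
    exact (measurable_layer_ind hV).comp (by fun_prop)
  simp_rw [h1]
  rw [lintegral_lintegral_swap]
  · refine lintegral_congr fun l => ?_
    rw [← lintegral_indicator (measurableSet_lt (by fun_prop) (by fun_prop))]
    refine lintegral_congr fun y => ?_
    simp [Set.indicator]
  · refine Measurable.aemeasurable ?_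
    have := (measurable_layer_ind hV).comp (measurable_swap (α := E3) (β := ℝ))
    exact (hw.comp measurable_fst).mul this

lemma abs_iter {v1 v2 u : E3 → ℝ≥0∞} (h1 : Measurable v1) (h2 : Measurable v2) (hu : Measurable u)
    {C : ℝ≥0∞} (huC : ∀ᵐ x, u x ≤ C)
    (hsmall : ∀ x, ∫⁻ y, kerC x y * v2 y ≤ 1 / 2)
    (hle : ∀ᵐ x, u x ≤ ∫⁻ y, kerC x y * ((v1 y + v2 y) * u y)) (n : ℕ) :
    ∀ w : E3 → ℝ≥0∞, Measurable w → (∀ x, w x ≤ v2 x) →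
    ∫⁻ x, w x * u x ≤ (∫⁻ x, v1 x * u x) + (1 / 2) ^ n * C * ∫⁻ x, w x := by
  induction n with
  | zero =>
    intro w hw hwv
    simp only [pow_zero, one_mul]
    refine le_add_left ?_
    rw [← lintegral_const_mul _ hw]
    refine lintegral_mono_ae ?_
    filter_upwards [huC] with x hx
    rw [mul_comm]; gcongr
  | succ n ih =>
    intro w hw hwv
    set M := ∫⁻ x, v1 x * u x
    set K : E3 → ℝ≥0∞ := fun y => ∫⁻ x, kerC x y * w x with hK
    have hKm : Measurable K :=
      Measurable.lintegral_prod_left' (f := fun p : E3 × E3 => kerC p.1 p.2 * w p.1)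
        (measurable_kerC.mul (hw.comp measurable_fst))
    have hKle : ∀ y, K y ≤ 1 / 2 := fun y => by
      refine le_trans (lintegral_mono fun x => ?_) (hsmall y)
      rw [kerC_comm]; gcongr; exact hwv x
    have step : ∀ q : E3 → ℝ≥0∞, Measurable q →
        ∫⁻ x, w x * ∫⁻ y, kerC x y * q y = ∫⁻ y, K y * q y := by
      intro q hq
      have e1 : ∀ x, w x * ∫⁻ y, kerC x y * q y = ∫⁻ y, w x * (kerC x y * q y) := fun x => by
        exact (lintegral_const_mul _ ((measurable_kerC_right x).mul hq)).symm
      simp_rw [e1]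
      rw [lintegral_lintegral_swap]
      · refine lintegral_congr fun y => ?_
        rw [hK, ← lintegral_mul_const]
        · refine lintegral_congr fun x => by ring
        · simp_rw [fun x => kerC_comm x y]
          exact (measurable_kerC_right y).mul hw
      · exact ((hw.comp measurable_fst).mul
          (measurable_kerC.mul (hq.comp measurable_snd))).aemeasurable
    have hmain : ∫⁻ x, w x * u x ≤ (∫⁻ y, K y * (v1 y * u y)) + ∫⁻ y, K y * v2 y * u y := by
      calc ∫⁻ x, w x * u x ≤ ∫⁻ x, w x * ∫⁻ y, kerC x y * ((v1 y + v2 y) * u y) := by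
            refine lintegral_mono_ae ?_
            filter_upwards [hle] with x hx
            gcongr
        _ = ∫⁻ y, K y * ((v1 y + v2 y) * u y) := step _ (by fun_prop)
        _ = ∫⁻ y, (K y * (v1 y * u y) + K y * v2 y * u y) :=
            lintegral_congr fun y => by ring
        _ = _ := lintegral_add_left (by fun_prop) _
    have hA : ∫⁻ y, K y * (v1 y * u y) ≤ 1 / 2 * M := by
      rw [← lintegral_const_mul _ (by fun_prop)]
      exact lintegral_mono fun y => by gcongr; exact hKle y
    have h22 : (2 : ℝ≥0∞)⁻¹ * 2 = 1 := ENNReal.inv_mul_cancel (by simp) (by simp)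
    have hih := ih (fun y => 2 * (K y * v2 y)) (by fun_prop) (fun y => by
      calc 2 * (K y * v2 y) ≤ 2 * ((1 / 2) * v2 y) := by gcongr; exact hKle y
        _ = (2⁻¹ * 2) * v2 y := by rw [one_div]; ring
        _ = v2 y := by rw [h22, one_mul])
    have hmass : ∫⁻ y, K y * v2 y ≤ 1 / 2 * ∫⁻ x, w x := by
      rw [← step v2 h2, ← lintegral_const_mul _ hw]
      exact lintegral_mono fun x => by rw [mul_comm]; gcongr; exact hsmall x
    have hB : ∫⁻ y, K y * v2 y * u y ≤ 1 / 2 * M + (1/2)^(n+1) * C * ∫⁻ x, w x := by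
      calc ∫⁻ y, K y * v2 y * u y = 1 / 2 * ∫⁻ y, 2 * (K y * v2 y) * u y := by
            rw [← lintegral_const_mul _ (by fun_prop)]
            refine lintegral_congr fun y => ?_
            rw [one_div, ← mul_assoc, ← mul_assoc, h22, one_mul]
        _ ≤ 1 / 2 * (M + (1 / 2) ^ n * C * ∫⁻ y, 2 * (K y * v2 y)) := by gcongr
        _ = 1 / 2 * M + (1/2)^n * C * ∫⁻ y, K y * v2 y := by
            rw [lintegral_const_mul _ (by fun_prop), mul_add, one_div]
            congr 1
            calc _ = (2⁻¹ * 2) * ((2⁻¹ : ℝ≥0∞)^n * C * ∫⁻ y, K y * v2 y) := by ring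
              _ = _ := by rw [h22, one_mul]
        _ ≤ 1 / 2 * M + (1/2)^n * C * (1 / 2 * ∫⁻ x, w x) := by gcongr
        _ = _ := by ring
    calc _ ≤ _ := hmain
      _ ≤ 1 / 2 * M + (1 / 2 * M + (1/2)^(n+1) * C * ∫⁻ x, w x) := add_le_add hA hB
      _ = _ := by rw [← add_assoc, ← add_mul, one_div, ENNReal.inv_two_add_inv_two, one_mul]

lemma abs_bound {v1 v2 u : E3 → ℝ≥0∞} (h1 : Measurable v1) (h2 : Measurable v2) (hu : Measurable u)
    {C : ℝ≥0∞} (hC : C ≠ ⊤) (huC : ∀ᵐ x, u x ≤ C)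
    (hsmall : ∀ x, ∫⁻ y, kerC x y * v2 y ≤ 1 / 2)
    (hle : ∀ᵐ x, u x ≤ ∫⁻ y, kerC x y * ((v1 y + v2 y) * u y)) :
    ∫⁻ x, v2 x * u x ≤ ∫⁻ x, v1 x * u x := by
  have key : ∀ w : E3 → ℝ≥0∞, Measurable w → (∀ x, w x ≤ v2 x) → ∫⁻ x, w x ≠ ⊤ →
      ∫⁻ x, w x * u x ≤ ∫⁻ x, v1 x * u x := by
    intro w hw hwv hwi
    have hlim : Filter.Tendsto (fun n : ℕ => (∫⁻ x, v1 x * u x) + (1 / 2) ^ n * (C * ∫⁻ x, w x))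
        Filter.atTop (nhds ((∫⁻ x, v1 x * u x) + 0 * (C * ∫⁻ x, w x))) := by
      refine tendsto_const_nhds.add (ENNReal.Tendsto.mul_const ?_ (Or.inr (ENNReal.mul_ne_top hC hwi)))
      exact ENNReal.tendsto_pow_atTop_nhds_zero_of_lt_one (by simp)
    rw [zero_mul, add_zero] at hlim
    refine ge_of_tendsto' hlim fun n => ?_
    rw [← mul_assoc]
    exact abs_iter h1 h2 hu huC hsmall hle n w hw hwv
  set w : ℕ → E3 → ℝ≥0∞ := fun n => Set.indicator (Metric.ball 0 n) (fun x => min (v2 x) n) with hwdef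
  have hwm : ∀ n, Measurable (w n) := fun n =>
    (h2.min measurable_const).indicator measurableSet_ball
  have hmono : Monotone w := by
    intro m n hmn x
    have : (m : ℝ) ≤ n := by exact_mod_cast hmn
    have h' : (m : ℝ≥0∞) ≤ n := by exact_mod_cast hmn
    refine (Set.indicator_le_indicator_of_subset (Metric.ball_subset_ball this) (fun _ => zero_le) x).trans ?_
    refine Set.indicator_le_indicator ?_
    exact min_le_min le_rfl h'
  have hsup : ∀ x, ⨆ n, w n x * u x = v2 x * u x := by
    intro x
    rw [← ENNReal.iSup_mul]
    congr 1
    refine le_antisymm (iSup_le fun n => ?_) ?_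
    · exact Set.indicator_apply_le' (fun _ => min_le_left _ _) (fun _ => zero_le)
    · refine le_of_forall_lt fun c hc => ?_
      obtain ⟨n, hn⟩ := exists_nat_gt ‖x‖
      obtain ⟨m, hm⟩ := ENNReal.exists_nat_gt hc.ne_top
      refine lt_of_lt_of_le ?_ (le_iSup _ (max n m))
      rw [hwdef]
      simp only
      rw [Set.indicator_of_mem]
      · refine lt_min hc (hm.trans_le ?_)
        exact_mod_cast le_max_right n m
      · rw [mem_ball_zero_iff]
        refine hn.trans_le ?_
        exact_mod_cast le_max_left n m
  calc ∫⁻ x, v2 x * u x = ∫⁻ x, ⨆ n, w n x * u x := lintegral_congr fun x => (hsup x).symm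
    _ = ⨆ n, ∫⁻ x, w n x * u x := lintegral_iSup (fun n => (hwm n).mul hu)
        (fun m n hmn x => by dsimp only; gcongr; exact hmono hmn x)
    _ ≤ _ := iSup_le fun n => key _ (hwm n)
        (fun x => Set.indicator_apply_le' (fun _ => min_le_left _ _) (fun _ => zero_le)) (by
          refine ne_top_of_le_ne_top ?_ (lintegral_mono (g := Set.indicator (Metric.ball 0 n) (fun x => (n:ℝ≥0∞))) ?_)
          · rw [lintegral_indicator measurableSet_ball]
            simp only [lintegral_const]
            refine ENNReal.mul_ne_top (by simp) ?_
            rw [Measure.restrict_apply_univ]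
            exact measure_ball_lt_top.ne
          · intro x
            exact Set.indicator_le_indicator (min_le_right _ _))

lemma layer_kernel {V : E3 → ℝ} (hV : Measurable V) : ∃ c : ℝ≥0∞, c ≠ ⊤ ∧
    ∀ (S : Set ℝ) (x : E3), ∫⁻ y, kerC x y * layer V S y ≤
      c * ∫⁻ l in S, (volume {x : E3 | l < ‖V x‖}) ^ ((2 : ℝ) / 3) := by
  obtain ⟨c, hc, h⟩ := kerC_set_bound
  refine ⟨c, hc, fun S x => ?_⟩
  rw [layer_lintegral hV S _ (measurable_kerC_right x), ← lintegral_const_mul' _ _ hc]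
  exact lintegral_mono fun l => h x _ (measurableSet_lt (by fun_prop) (by fun_prop))

lemma kernel_V_bound {V : E3 → ℝ} (hVm : Measurable V) (hV : MemL321 V) :
    ∃ B : ℝ≥0∞, B ≠ ⊤ ∧ ∀ x, ∫⁻ y, kerC x y * ‖V y‖ₑ ≤ B := by
  obtain ⟨c, hc, h⟩ := layer_kernel hVm
  refine ⟨c * lorentzNorm321 V, ENNReal.mul_ne_top hc hV.ne, fun x => ?_⟩
  have := h (Set.Ioi 0) x
  simp_rw [layer_Ioi] at this
  exact this

lemma vol_level {V : E3 → ℝ} (hV : MemL321 V) {d : ℝ} (hd : 0 < d) :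
    volume {x : E3 | d < ‖V x‖} ≠ ⊤ := by
  intro htop
  apply hV.ne
  unfold lorentzNorm321
  rw [eq_top_iff]
  calc ⊤ = ∫⁻ l in Set.Ioc 0 d, (⊤ : ℝ≥0∞) := by
        simp [hd, ENNReal.top_mul]
    _ ≤ ∫⁻ l in Set.Ioc 0 d, (volume {x : E3 | l < ‖V x‖}) ^ ((2 : ℝ) / 3) := by
        refine setLIntegral_mono' measurableSet_Ioc fun l hl => ?_
        have : volume {x : E3 | l < ‖V x‖} = ⊤ := by
          rw [eq_top_iff, ← htop]
          exact measure_mono fun x hx => lt_of_le_of_lt hl.2 hx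
        rw [this, ENNReal.top_rpow_of_pos (by norm_num)]
    _ ≤ _ := lintegral_mono_set fun l hl => hl.1

lemma exists_small_set {F : ℝ → ℝ≥0∞} (hF : ∫⁻ l in Set.Ioi 0, F l ≠ ⊤) {e : ℝ≥0∞} (he : 0 < e) :
    ∃ d N : ℝ, 0 < d ∧ ∫⁻ l in Set.Ioi 0 \ Set.Icc d N, F l ≤ e := by
  set μ : Measure ℝ := (volume.restrict (Set.Ioi 0)).withDensity F with hμ
  set s : ℕ → Set ℝ := fun n => Set.Ioi 0 \ Set.Icc (1 / ((n : ℝ) + 1)) n with hs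
  have hsm : ∀ n, MeasurableSet (s n) := fun n => measurableSet_Ioi.diff measurableSet_Icc
  have hval : ∀ n, μ (s n) = ∫⁻ l in s n, F l := fun n => by
    rw [hμ, withDensity_apply _ (hsm n), Measure.restrict_restrict (hsm n),
      Set.inter_eq_left.mpr Set.sdiff_subset]
  have hanti : Antitone s := by
    intro m n hmn
    have h1 : (m : ℝ) ≤ n := by exact_mod_cast hmn
    refine Set.sdiff_subset_sdiff_right (Set.Icc_subset_Icc ?_ h1)
    gcongr
  have hempty : ⋂ n, s n = ∅ := by
    ext l
    simp only [Set.mem_iInter, Set.mem_empty_iff_false, iff_false]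
    intro h
    have hl : 0 < l := (h 0).1
    obtain ⟨n, hn⟩ := exists_nat_gt (max l (1 / l))
    refine (h n).2 ⟨?_, (le_max_left _ _).trans hn.le⟩
    have := (le_max_right l (1/l)).trans hn.le
    rw [div_le_iff₀ (by positivity)]
    rw [div_le_iff₀ hl] at this
    nlinarith
  have ht := tendsto_measure_iInter_atTop (μ := μ) (s := s) (fun n => (hsm n).nullMeasurableSet) hanti
    ⟨0, by
      rw [hval]
      exact ne_top_of_le_ne_top hF (lintegral_mono_set Set.sdiff_subset)⟩
  rw [hempty, measure_empty] at ht
  obtain ⟨n, hn⟩ := (ht.eventually_le_const he).exists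
  exact ⟨1 / ((n:ℝ)+1), n, by positivity, by rw [← hval n]; exact hn⟩

lemma enorm_ker (V : E3 → ℝ) (φ : E3 → ℂ) (x y : E3) :
    ‖(V y : ℂ) * φ y / (‖x - y‖ : ℂ)‖ₑ = kerC x y * (‖V y‖ₑ * ‖φ y‖ₑ) := by
  unfold kerC
  rw [div_eq_mul_inv, enorm_mul, enorm_mul, ← Complex.ofReal_inv, mul_comm]
  congr 1
  · rw [← ofReal_norm]; simp
  · congr 1
    rw [← ofReal_norm, ← ofReal_norm]; simp

lemma Vphi_lt_top (V : E3 → ℝ) (hVmeas : Measurable V) (hV : MemL321 V)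
    (φ : E3 → ℂ) (hφmeas : Measurable φ) (hφbdd : ∃ C : ℝ, ∀ᵐ x : E3 ∂volume, ‖φ x‖ ≤ C)
    (heq : ∀ᵐ x : E3 ∂volume,
      Integrable (fun y : E3 => (V y : ℂ) * φ y / (‖x - y‖ : ℂ)) volume ∧
      φ x = -(1 / (4 * (Real.pi : ℂ))) * ∫ y : E3, (V y : ℂ) * φ y / (‖x - y‖ : ℂ)) :
    ∫⁻ y, ‖V y‖ₑ * ‖φ y‖ₑ < ⊤ := by
  obtain ⟨C, hC⟩ := hφbdd
  have hC' : ∀ᵐ x : E3 ∂volume, ‖φ x‖ₑ ≤ ENNReal.ofReal C := by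
    filter_upwards [hC] with x hx
    rw [← ofReal_norm]
    exact ENNReal.ofReal_le_ofReal hx
  obtain ⟨c, hc, hk⟩ := layer_kernel hVmeas
  have he : 0 < (1 / 2 : ℝ≥0∞) / (c + 1) := by
    refine ENNReal.div_pos (by simp) (by simp [hc])
  obtain ⟨d, N, hd, hdN⟩ := exists_small_set
    (F := fun l => (volume {x : E3 | l < ‖V x‖}) ^ ((2 : ℝ) / 3)) hV.ne he
  set S : Set ℝ := Set.Ioi 0 \ Set.Icc d N
  set v1 := layer V (Set.Icc d N)
  set v2 := layer V S
  have hv1 : Measurable v1 := measurable_layer hVmeas _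
  have hv2 : Measurable v2 := measurable_layer hVmeas _
  have hsum : ∀ y, v1 y + v2 y = ‖V y‖ₑ := by
    intro y
    rw [← layer_Ioi y]
    simp only [v1, v2, layer, S]
    rw [← lintegral_inter_add_sdiff (μ := volume) _ (Set.Ioi 0) (measurableSet_Icc (a := d) (b := N)),
      Set.inter_eq_right.mpr (show Set.Icc d N ⊆ Set.Ioi 0 from fun l hl => lt_of_lt_of_le hd hl.1)]
  have hv1i : ∫⁻ y, v1 y < ⊤ := by
    have := layer_lintegral hVmeas (Set.Icc d N) 1 measurable_one
    simp only [Pi.one_apply, one_mul, lintegral_one, Measure.restrict_apply_univ] at this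
    change ∫⁻ y, layer V (Set.Icc d N) y < ⊤
    rw [this]
    calc ∫⁻ l in Set.Icc d N, volume {y | l < ‖V y‖} ≤ ∫⁻ l in Set.Icc d N, volume {y | d/2 < ‖V y‖} := by
          refine setLIntegral_mono' measurableSet_Icc fun l hl => measure_mono fun y hy => ?_
          exact lt_trans (by linarith [hl.1] : d/2 < l) hy
      _ < ⊤ := by
          rw [setLIntegral_const]
          exact ENNReal.mul_lt_top (vol_level hV (by positivity)).lt_top (by simp)
  have hsmall : ∀ x, ∫⁻ y, kerC x y * v2 y ≤ 1 / 2 := fun x => by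
    refine (hk S x).trans ?_
    calc _ ≤ (c + 1) * ((1 / 2 : ℝ≥0∞) / (c + 1)) := mul_le_mul' le_self_add hdN
      _ ≤ 1 / 2 := ENNReal.mul_div_le
  have hle : ∀ᵐ x, ‖φ x‖ₑ ≤ ∫⁻ y, kerC x y * ((v1 y + v2 y) * ‖φ y‖ₑ) := by
    filter_upwards [heq] with x hx
    simp_rw [hsum, ← enorm_ker]
    rw [hx.2, enorm_mul]
    calc _ ≤ 1 * ‖∫ y : E3, (V y : ℂ) * φ y / (‖x - y‖ : ℂ)‖ₑ := by
          gcongr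
          rw [← ofReal_norm, ENNReal.ofReal_le_one]
          simp only [norm_neg, norm_div, norm_mul, norm_one, Complex.norm_real, Complex.norm_ofNat]
          rw [Real.norm_of_nonneg Real.pi_pos.le, div_le_one (by positivity)]
          linarith [Real.pi_gt_three]
      _ ≤ _ := by rw [one_mul]; exact enorm_integral_le_lintegral_enorm _
  have hb := abs_bound hv1 hv2 hφmeas.enorm ENNReal.ofReal_ne_top hC' hsmall hle
  have hfin : ∫⁻ y, v1 y * ‖φ y‖ₑ < ⊤ := by
    calc ∫⁻ y, v1 y * ‖φ y‖ₑ ≤ ∫⁻ y, v1 y * ENNReal.ofReal C := by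
          refine lintegral_mono_ae ?_
          filter_upwards [hC'] with y hy
          gcongr
      _ = (∫⁻ y, v1 y) * ENNReal.ofReal C := lintegral_mul_const _ hv1
      _ < ⊤ := ENNReal.mul_lt_top hv1i ENNReal.ofReal_lt_top
  simp_rw [← hsum, add_mul]
  rw [lintegral_add_left (by fun_prop)]
  exact ENNReal.add_lt_top.mpr ⟨hfin, hb.trans_lt hfin⟩

/-- Gaussian factor -/
noncomputable def gF (x : E3) (w : ℝ × E3) : ℝ :=
  (w.1 * √w.1) * Real.exp (-(2 * w.1 ^ 2) * ‖x - w.2‖ ^ 2)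

/-- Measure on the parameter space. -/
noncomputable def muW : Measure (ℝ × E3) := (volume.restrict (Set.Ioi (0 : ℝ))).prod volume

instance : SFinite muW := by unfold muW; infer_instance

lemma measurable_gF : Measurable (fun p : E3 × (ℝ × E3) => gF p.1 p.2) := by
  unfold gF; fun_prop

lemma gauss_s {a r : ℝ} (ha : 0 < a) (hr : 0 < r) :
    ∫⁻ s in Set.Ioi (0 : ℝ), ENNReal.ofReal (Real.exp (-(a * s ^ 2) * r ^ 2)) =
      ENNReal.ofReal (√(Real.pi / a) / 2 * r⁻¹) := by
  have h : ∀ s : ℝ, -(a * s ^ 2) * r ^ 2 = -(a * r ^ 2) * s ^ 2 := fun s => by ring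
  simp_rw [h]
  rw [← ofReal_integral_eq_lintegral_ofReal
    (integrable_exp_neg_mul_sq (by positivity)).integrableOn
    (Filter.Eventually.of_forall fun s => (Real.exp_pos _).le), integral_gaussian_Ioi]
  congr 1
  rw [← div_div, Real.sqrt_div' _ (by positivity), Real.sqrt_sq hr.le]
  field_simp

lemma gauss_z {s : ℝ} (hs : 0 < s) (x y : E3) :
    ∫⁻ z, ENNReal.ofReal (gF x (s, z) * gF y (s, z)) =
      ENNReal.ofReal ((Real.pi / 4) ^ ((3 : ℝ) / 2) * Real.exp (-(1 * s ^ 2) * ‖x - y‖ ^ 2)) := by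
  set m : E3 := (2 : ℝ)⁻¹ • (x + y) with hm
  have key : ∀ z, gF x (s, z) * gF y (s, z) =
      s ^ 3 * Real.exp (-(1 * s ^ 2) * ‖x - y‖ ^ 2) * Real.exp (-(4 * s ^ 2) * ‖z - m‖ ^ 2) := by
    intro z
    have hp : ‖x - z‖ ^ 2 + ‖y - z‖ ^ 2 = 2 * ‖z - m‖ ^ 2 + ‖x - y‖ ^ 2 / 2 := by
      have h1 := parallelogram_law_with_norm ℝ (x - z) (y - z)
      have e1 : x - z + (y - z) = (-2 : ℝ) • (z - m) := by
        rw [hm]; module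
      have e2 : x - z - (y - z) = x - y := by abel
      rw [e1, e2, norm_smul] at h1
      norm_num at h1
      nlinarith
    unfold gF
    simp only
    have hs2 : √s * √s = s := Real.mul_self_sqrt hs.le
    calc _ = s ^ 2 * (√s * √s) * (Real.exp (-(2 * s ^ 2) * ‖x - z‖ ^ 2) *
            Real.exp (-(2 * s ^ 2) * ‖y - z‖ ^ 2)) := by ring
      _ = s ^ 3 * (Real.exp (-(1 * s ^ 2) * ‖x - y‖ ^ 2) * Real.exp (-(4 * s ^ 2) * ‖z - m‖ ^ 2)) := by
          rw [hs2, ← Real.exp_add, ← Real.exp_add]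
          rw [show -(2 * s ^ 2) * ‖x - z‖ ^ 2 + -(2 * s ^ 2) * ‖y - z‖ ^ 2
            = -(2 * s ^ 2) * (‖x - z‖ ^ 2 + ‖y - z‖ ^ 2) by ring, hp]
          ring_nf
      _ = _ := by ring
  simp_rw [key]
  have hint0 : Integrable (fun v : E3 => Real.exp (-(4 * s ^ 2) * ‖v‖ ^ 2)) := by
    have := (GaussianFourier.integrable_cexp_neg_mul_sq_norm_add (V := E3)
      (b := ((4 * s ^ 2 : ℝ) : ℂ)) (by rw [Complex.ofReal_re]; positivity) 0 0).norm
    refine this.congr (Filter.Eventually.of_forall fun v => ?_)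
    simp only [zero_mul, add_zero]
    rw [Complex.norm_exp]
    congr 1
    rw [← Complex.ofReal_neg, ← Complex.ofReal_pow, ← Complex.ofReal_mul, Complex.ofReal_re]
  have hIntg : Integrable (fun z : E3 => Real.exp (-(4 * s ^ 2) * ‖z - m‖ ^ 2)) :=
    hint0.comp_sub_right m
  rw [← ofReal_integral_eq_lintegral_ofReal (hIntg.const_mul _)
    (Filter.Eventually.of_forall fun z => by positivity)]
  rw [integral_const_mul, integral_sub_right_eq_self (fun v : E3 => Real.exp (-(4 * s ^ 2) * ‖v‖ ^ 2)) m,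
    GaussianFourier.integral_rexp_neg_mul_sq_norm (by positivity)]
  congr 1
  simp only [finrank_euclideanSpace, Fintype.card_fin, Nat.cast_ofNat]
  rw [← div_div, Real.div_rpow (by positivity) (by positivity), ← Real.rpow_natCast s 2,
    ← Real.rpow_mul hs.le]
  norm_num
  have : s ^ 3 ≠ 0 := by positivity
  field_simp

lemma gauss_kernel : ∃ c : ℝ, 0 < c ∧ ∀ x y : E3, x ≠ y →
    ∫⁻ w, ENNReal.ofReal (gF x w * gF y w) ∂muW = ENNReal.ofReal (c * ‖x - y‖⁻¹) := by
  refine ⟨(Real.pi / 4) ^ ((3 : ℝ) / 2) * (√(Real.pi / 1) / 2), by positivity, fun x y hxy => ?_⟩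
  have hr : 0 < ‖x - y‖ := norm_pos_iff.mpr (sub_ne_zero.mpr hxy)
  unfold muW
  rw [lintegral_prod _ (by
    refine Measurable.aemeasurable ?_
    unfold gF; fun_prop)]
  rw [setLIntegral_congr_fun measurableSet_Ioi (fun s hs => gauss_z hs x y)]
  simp_rw [ENNReal.ofReal_mul (show 0 ≤ (Real.pi / 4) ^ ((3 : ℝ) / 2) by positivity)]
  rw [lintegral_const_mul _ (by fun_prop), gauss_s one_pos hr,
    ← ENNReal.ofReal_mul (by positivity), mul_assoc]

lemma ae_ne (x : E3) : ∀ᵐ y : E3, x ≠ y := by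
  have : ({x}ᶜ : Set E3) ∈ ae volume := compl_mem_ae_iff.mpr (measure_singleton x)
  filter_upwards [this] with y hy h
  exact hy h.symm

lemma ae_ne_prod : ∀ᵐ p : E3 × E3 ∂(volume.prod volume), p.1 ≠ p.2 := by
  have hm : MeasurableSet {p : E3 × E3 | p.1 ≠ p.2} :=
    (measurableSet_eq_fun measurable_fst measurable_snd).compl
  exact (Measure.ae_prod_mem_iff_ae_ae_mem hm).mpr (Filter.Eventually.of_forall fun x => ae_ne x)

lemma gF_nonneg_mul' (x y : E3) (w : ℝ × E3) : 0 ≤ gF x w * gF y w := by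
  unfold gF
  have := Real.exp_pos (-(2 * w.1 ^ 2) * ‖x - w.2‖ ^ 2)
  have := Real.exp_pos (-(2 * w.1 ^ 2) * ‖y - w.2‖ ^ 2)
  have e : ∀ a b c : ℝ, a * b * (a * c) = a ^ 2 * (b * c) := fun a b c => by ring
  rw [e]
  positivity

open ComplexConjugate

lemma energy {f : E3 → ℂ} (hf : Measurable f)
    (hfin : ∫⁻ x, ∫⁻ y, ‖f x‖ₑ * (kerC x y * ‖f y‖ₑ) < ⊤) :
    ∃ c : ℝ, 0 < c ∧ Integrable (fun w => ‖∫ x, f x * (gF x w : ℂ)‖ ^ 2) muW ∧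
      Integrable (fun p : E3 × E3 => f p.1 * conj (f p.2) * ((‖p.1 - p.2‖⁻¹ : ℝ) : ℂ))
        (volume.prod volume) ∧
      (c : ℂ) * ∫ p : E3 × E3, f p.1 * conj (f p.2) * ((‖p.1 - p.2‖⁻¹ : ℝ) : ℂ) ∂(volume.prod volume)
        = ((∫ w, ‖∫ x, f x * (gF x w : ℂ)‖ ^ 2 ∂muW : ℝ) : ℂ) := by
  obtain ⟨c, hc, hk⟩ := gauss_kernel
  have hcj : Measurable (fun x => conj (f x)) := Complex.continuous_conj.measurable.comp hf
  have hg1 : Measurable (fun q : (E3 × E3) × (ℝ × E3) => gF q.1.1 q.2) :=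
    measurable_gF.comp (f := fun q : (E3 × E3) × (ℝ × E3) => (q.1.1, q.2)) (by fun_prop)
  have hg2 : Measurable (fun q : (E3 × E3) × (ℝ × E3) => gF q.1.2 q.2) :=
    measurable_gF.comp (f := fun q : (E3 × E3) × (ℝ × E3) => (q.1.2, q.2)) (by fun_prop)
  have hH : Measurable (fun p : E3 × E3 => f p.1 * conj (f p.2) * ((‖p.1 - p.2‖⁻¹ : ℝ) : ℂ)) := by
    refine ((hf.comp measurable_fst).mul (hcj.comp measurable_snd)).mul ?_
    exact Complex.measurable_ofReal.comp (by fun_prop)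
  have hHe : ∀ p : E3 × E3, ‖f p.1 * conj (f p.2) * ((‖p.1 - p.2‖⁻¹ : ℝ) : ℂ)‖ₑ
      = ‖f p.1‖ₑ * (kerC p.1 p.2 * ‖f p.2‖ₑ) := by
    intro p
    rw [enorm_mul, enorm_mul]
    have e1 : ‖conj (f p.2)‖ₑ = ‖f p.2‖ₑ := by
      rw [← ofReal_norm, ← ofReal_norm]; simp
    have e2 : ‖((‖p.1 - p.2‖⁻¹ : ℝ) : ℂ)‖ₑ = kerC p.1 p.2 := by
      unfold kerC
      rw [← ofReal_norm]; simp
    rw [e1, e2]; ring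
  have hHlt : ∫⁻ p : E3 × E3, ‖f p.1‖ₑ * (kerC p.1 p.2 * ‖f p.2‖ₑ) ∂(volume.prod volume) < ⊤ := by
    have hmm : Measurable fun p : E3 × E3 => ‖f p.1‖ₑ * (kerC p.1 p.2 * ‖f p.2‖ₑ) :=
      (hf.comp measurable_fst).enorm.mul (measurable_kerC.mul (hf.comp measurable_snd).enorm)
    rw [lintegral_prod _ hmm.aemeasurable]
    exact hfin
  have hHint : Integrable (fun p : E3 × E3 => f p.1 * conj (f p.2) * ((‖p.1 - p.2‖⁻¹ : ℝ) : ℂ))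
      (volume.prod volume) := by
    refine ⟨hH.aestronglyMeasurable, ?_⟩
    rw [hasFiniteIntegral_iff_enorm]
    simp_rw [hHe]
    exact hHlt
  set G : (E3 × E3) → (ℝ × E3) → ℂ := fun p w =>
    f p.1 * conj (f p.2) * ((gF p.1 w * gF p.2 w : ℝ) : ℂ) with hG
  have hGm : Measurable (Function.uncurry G) := by
    refine ((hf.comp (measurable_fst.comp measurable_fst)).mul
      (hcj.comp (measurable_snd.comp measurable_fst))).mul ?_
    exact Complex.measurable_ofReal.comp (hg1.mul hg2)
  have hGint : Integrable (Function.uncurry G) ((volume.prod volume).prod muW) := by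
    refine ⟨hGm.aestronglyMeasurable, ?_⟩
    rw [hasFiniteIntegral_iff_enorm, lintegral_prod _ hGm.enorm.aemeasurable]
    have : ∫⁻ p : E3 × E3, ∫⁻ w, ‖Function.uncurry G (p, w)‖ₑ ∂muW ∂(volume.prod volume)
        = ∫⁻ p : E3 × E3, ENNReal.ofReal c * (‖f p.1‖ₑ * (kerC p.1 p.2 * ‖f p.2‖ₑ))
          ∂(volume.prod volume) := by
      refine lintegral_congr_ae ?_
      filter_upwards [ae_ne_prod] with p hp
      have e : ∀ w, ‖Function.uncurry G (p, w)‖ₑ =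
          ‖f p.1 * conj (f p.2)‖ₑ * ENNReal.ofReal (gF p.1 w * gF p.2 w) := by
        intro w
        simp only [Function.uncurry, hG]
        rw [enorm_mul]
        congr 1
        rw [← ofReal_norm, Complex.norm_real, Real.norm_of_nonneg (gF_nonneg_mul' _ _ _)]
      simp_rw [e]
      rw [lintegral_const_mul' _ _ enorm_ne_top, hk _ _ hp,
        ENNReal.ofReal_mul hc.le, ← hHe, enorm_mul _ ((‖p.1 - p.2‖⁻¹ : ℝ) : ℂ)]
      have e2 : ‖((‖p.1 - p.2‖⁻¹ : ℝ) : ℂ)‖ₑ = ENNReal.ofReal ‖p.1 - p.2‖⁻¹ := by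
        rw [← ofReal_norm]; simp
      rw [e2]; ring
    rw [this, lintegral_const_mul' _ _ ENNReal.ofReal_ne_top]
    exact ENNReal.mul_lt_top ENNReal.ofReal_lt_top hHlt
  have hGp : ∀ p : E3 × E3, p.1 ≠ p.2 → ∫ w, G p w ∂muW =
      (c : ℂ) * (f p.1 * conj (f p.2) * ((‖p.1 - p.2‖⁻¹ : ℝ) : ℂ)) := by
    intro p hp
    simp only [hG]
    rw [integral_const_mul, integral_complex_ofReal, integral_eq_lintegral_of_nonneg_ae
      (Filter.Eventually.of_forall fun w => gF_nonneg_mul' _ _ _)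
      (Measurable.aestronglyMeasurable (by unfold gF; fun_prop)), hk _ _ hp,
      ENNReal.toReal_ofReal (by positivity)]
    push_cast; ring
  have hGw : ∀ w, ∫ p : E3 × E3, G p w ∂(volume.prod volume) =
      ((‖∫ x, f x * (gF x w : ℂ)‖ ^ 2 : ℝ) : ℂ) := by
    intro w
    have e : ∀ p : E3 × E3, G p w = (f p.1 * (gF p.1 w : ℂ)) * (conj (f p.2 * (gF p.2 w : ℂ))) := by
      intro p
      simp only [hG, map_mul, Complex.conj_ofReal]; push_cast; ring
    simp_rw [e]
    rw [integral_prod_mul (fun x => f x * (gF x w : ℂ)) (fun x => conj (f x * (gF x w : ℂ))),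
      integral_conj, Complex.mul_conj, Complex.normSq_eq_norm_sq]
  refine ⟨c, hc, ?_, hHint, ?_⟩
  · have := hGint.integral_prod_right
    simp only [Function.uncurry] at this
    simp_rw [hGw] at this
    exact this.re
  · rw [← integral_const_mul, ← integral_complex_ofReal]
    simp_rw [← hGw]
    rw [← integral_integral_swap hGint]
    refine integral_congr_ae ?_
    filter_upwards [ae_ne_prod] with p hp
    rw [hGp p hp]

lemma potential_zero {f : E3 → ℂ} (hf : Measurable f)
    (hz : ∀ᵐ w ∂muW, ∫ x, f x * (gF x w : ℂ) = 0) :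
    ∀ᵐ z : E3, Integrable (fun y => f y / (‖z - y‖ : ℂ)) → ∫ y, f y / (‖z - y‖ : ℂ) = 0 := by
  have hm : Measurable (fun w : ℝ × E3 => ∫ x, f x * (gF x w : ℂ)) := by
    have : StronglyMeasurable (fun q : (ℝ × E3) × E3 => f q.2 * (gF q.2 q.1 : ℂ)) := by
      refine Measurable.stronglyMeasurable ((hf.comp measurable_snd).mul ?_)
      exact Complex.measurable_ofReal.comp (measurable_gF.comp (by fun_prop :
        Measurable fun q : (ℝ × E3) × E3 => (q.2, q.1)))
    exact this.integral_prod_right.measurable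
  have h1 : ∀ᵐ z : E3, ∀ᵐ s ∂(volume.restrict (Set.Ioi (0:ℝ))), ∫ x, f x * (gF x (s, z) : ℂ) = 0 := by
    unfold muW at hz
    have := Measure.ae_ae_of_ae_prod hz
    exact (Measure.ae_ae_comm (p := fun (s : ℝ) (z : E3) => ∫ x, f x * (gF x (s, z) : ℂ) = 0)
      (measurableSet_eq_fun hm measurable_const)).mp this
  filter_upwards [h1] with z hz1 hIntg
  set c : ℝ := √(Real.pi / 2) / 2 with hcdef
  have hc : 0 < c := by positivity
  set G : E3 → ℝ → ℂ := fun y s => f y * ((Real.exp (-(2 * s ^ 2) * ‖z - y‖ ^ 2) : ℝ) : ℂ) with hG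
  have hGm : Measurable (Function.uncurry G) := by
    refine (hf.comp measurable_fst).mul (Complex.measurable_ofReal.comp (by fun_prop))
  have hk : ∀ y, z ≠ y → ∫⁻ s in Set.Ioi (0:ℝ), ENNReal.ofReal (Real.exp (-(2 * s ^ 2) * ‖z - y‖ ^ 2))
      = ENNReal.ofReal (c * ‖z - y‖⁻¹) := fun y hy =>
    gauss_s two_pos (norm_pos_iff.mpr (sub_ne_zero.mpr hy))
  have hGint : Integrable (Function.uncurry G) (volume.prod (volume.restrict (Set.Ioi (0:ℝ)))) := by
    refine ⟨hGm.aestronglyMeasurable, ?_⟩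
    rw [hasFiniteIntegral_iff_enorm, lintegral_prod _ hGm.enorm.aemeasurable]
    have : ∫⁻ y : E3, ∫⁻ s in Set.Ioi (0:ℝ), ‖Function.uncurry G (y, s)‖ₑ
        = ∫⁻ y : E3, ENNReal.ofReal c * ‖f y / (‖z - y‖ : ℂ)‖ₑ := by
      refine lintegral_congr_ae ?_
      filter_upwards [ae_ne z] with y hy
      have e : ∀ s, ‖Function.uncurry G (y, s)‖ₑ =
          ‖f y‖ₑ * ENNReal.ofReal (Real.exp (-(2 * s ^ 2) * ‖z - y‖ ^ 2)) := by
        intro s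
        simp only [Function.uncurry, hG]
        rw [enorm_mul]
        congr 1
        rw [← ofReal_norm, Complex.norm_real, Real.norm_of_nonneg (Real.exp_pos _).le]
      simp_rw [e]
      rw [lintegral_const_mul _ (by fun_prop), hk _ hy, ENNReal.ofReal_mul hc.le,
        div_eq_mul_inv, enorm_mul]
      have e2 : ‖((‖z - y‖ : ℝ) : ℂ)⁻¹‖ₑ = ENNReal.ofReal ‖z - y‖⁻¹ := by
        rw [← ofReal_norm]; simp
      rw [e2]; ring
    rw [this, lintegral_const_mul' _ _ ENNReal.ofReal_ne_top]
    refine ENNReal.mul_lt_top ENNReal.ofReal_lt_top ?_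
    exact hasFiniteIntegral_iff_enorm.mp hIntg.2
  have hGp : ∀ y, z ≠ y → ∫ s in Set.Ioi (0:ℝ), G y s = (c : ℂ) * (f y / (‖z - y‖ : ℂ)) := by
    intro y hy
    simp only [hG]
    rw [integral_const_mul, integral_complex_ofReal, integral_eq_lintegral_of_nonneg_ae
      (Filter.Eventually.of_forall fun w => (Real.exp_pos _).le)
      (Measurable.aestronglyMeasurable (by fun_prop)), hk _ hy,
      ENNReal.toReal_ofReal (by positivity)]
    push_cast; ring
  have hswap := integral_integral_swap hGint
  have hL : ∫ y, ∫ s in Set.Ioi (0:ℝ), G y s = (c : ℂ) * ∫ y, f y / (‖z - y‖ : ℂ) := by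
    rw [← integral_const_mul]
    refine integral_congr_ae ?_
    filter_upwards [ae_ne z] with y hy
    exact hGp y hy
  have hR : ∫ s in Set.Ioi (0:ℝ), ∫ y, G y s = 0 := by
    refine integral_eq_zero_of_ae ?_
    filter_upwards [hz1, ae_restrict_mem measurableSet_Ioi] with s hs hs0
    have hs0' : (0:ℝ) < s := hs0
    have e : ∀ y, f y * (gF y (s, z) : ℂ) = ((s * √s : ℝ) : ℂ) * G y s := by
      intro y
      simp only [hG, gF]
      rw [norm_sub_rev y z]
      push_cast; ring
    simp_rw [e] at hs
    rw [integral_const_mul] at hs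
    have hne : ((s * √s : ℝ) : ℂ) ≠ 0 := by
      rw [Complex.ofReal_ne_zero]; positivity
    exact (mul_eq_zero.mp hs).resolve_left hne
  rw [hL, hR] at hswap
  exact (mul_eq_zero.mp hswap).resolve_left (by exact_mod_cast hc.ne')

/-- Lemma 2.2: for `φ ∈ 𝓜`, the quantity `-∫ V|φ|²` is well defined and nonnegative, and
vanishes only for `φ = 0`. -/
theorem inner_product_on_M (V : E3 → ℝ) (hVmeas : Measurable V) (hV : MemL321 V)
    (φ : E3 → ℂ) (hφmeas : Measurable φ) (hφbdd : ∃ C : ℝ, ∀ᵐ x : E3 ∂volume, ‖φ x‖ ≤ C)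
    (heq : ∀ᵐ x : E3 ∂volume,
      Integrable (fun y : E3 => (V y : ℂ) * φ y / (‖x - y‖ : ℂ)) volume ∧
      φ x = -(1 / (4 * (Real.pi : ℂ))) * ∫ y : E3, (V y : ℂ) * φ y / (‖x - y‖ : ℂ)) :
    Integrable (fun x : E3 => V x * ‖φ x‖ ^ 2) volume ∧
    (∫ x : E3, V x * ‖φ x‖ ^ 2) ≤ 0 ∧
    ((∫ x : E3, V x * ‖φ x‖ ^ 2) = 0 → φ =ᵐ[volume] 0) := by
  have hfin := Vphi_lt_top V hVmeas hV φ hφmeas hφbdd heq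
  obtain ⟨C, hC⟩ := hφbdd
  have hC' : ∀ᵐ x : E3 ∂volume, ‖φ x‖ₑ ≤ ENNReal.ofReal C := by
    filter_upwards [hC] with x hx
    rw [← ofReal_norm]
    exact ENNReal.ofReal_le_ofReal hx
  set f : E3 → ℂ := fun y => (V y : ℂ) * φ y with hf
  have hfm : Measurable f := (Complex.measurable_ofReal.comp hVmeas).mul hφmeas
  have hfe : ∀ y, ‖f y‖ₑ = ‖V y‖ₑ * ‖φ y‖ₑ := fun y => by
    simp only [hf]
    rw [enorm_mul]
    congr 1
    rw [← ofReal_norm, ← ofReal_norm]; simp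
  obtain ⟨B, hB, hVB⟩ := kernel_V_bound hVmeas hV
  have hen : ∫⁻ x, ∫⁻ y, ‖f x‖ₑ * (kerC x y * ‖f y‖ₑ) < ⊤ := by
    calc ∫⁻ x, ∫⁻ y, ‖f x‖ₑ * (kerC x y * ‖f y‖ₑ)
        ≤ ∫⁻ x, ‖f x‖ₑ * (B * ENNReal.ofReal C) := by
          refine lintegral_mono fun x => ?_
          have hmm : Measurable fun y => kerC x y * ‖f y‖ₑ :=
            (measurable_kerC_right x).mul hfm.enorm
          have hmm' : Measurable fun y => kerC x y * ‖V y‖ₑ :=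
            (measurable_kerC_right x).mul hVmeas.enorm
          dsimp only
          rw [lintegral_const_mul _ hmm]
          gcongr
          calc ∫⁻ y, kerC x y * ‖f y‖ₑ ≤ ∫⁻ y, kerC x y * ‖V y‖ₑ * ENNReal.ofReal C := by
                refine lintegral_mono_ae ?_
                filter_upwards [hC'] with y hy
                rw [hfe, mul_assoc]
                gcongr
            _ = (∫⁻ y, kerC x y * ‖V y‖ₑ) * ENNReal.ofReal C := lintegral_mul_const _ hmm'
            _ ≤ _ := by gcongr; exact hVB x
      _ = (∫⁻ x, ‖f x‖ₑ) * (B * ENNReal.ofReal C) := lintegral_mul_const _ hfm.enorm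
      _ < ⊤ := by
          refine ENNReal.mul_lt_top ?_ (ENNReal.mul_lt_top hB.lt_top ENNReal.ofReal_lt_top)
          simp_rw [hfe]; exact hfin
  obtain ⟨c, hc, hFint, hHint, hE⟩ := energy hfm hen
  have hIntg : Integrable (fun x : E3 => V x * ‖φ x‖ ^ 2) volume := by
    refine ⟨(by fun_prop : Measurable fun x => V x * ‖φ x‖ ^ 2).aestronglyMeasurable, ?_⟩
    rw [hasFiniteIntegral_iff_enorm]
    calc ∫⁻ x, ‖V x * ‖φ x‖ ^ 2‖ₑ ≤ ∫⁻ x, (‖V x‖ₑ * ‖φ x‖ₑ) * ENNReal.ofReal C := by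
          refine lintegral_mono_ae ?_
          filter_upwards [hC'] with x hx
          rw [enorm_mul, enorm_pow, enorm_norm, pow_two, mul_assoc]
          gcongr
      _ = (∫⁻ x, ‖V x‖ₑ * ‖φ x‖ₑ) * ENNReal.ofReal C := lintegral_mul_const _ (by fun_prop)
      _ < ⊤ := ENNReal.mul_lt_top hfin ENNReal.ofReal_lt_top
  set I := ∫ p : E3 × E3, f p.1 * conj (f p.2) * ((‖p.1 - p.2‖⁻¹ : ℝ) : ℂ) ∂(volume.prod volume)
  have hIeq : ((∫ x : E3, V x * ‖φ x‖ ^ 2 : ℝ) : ℂ) = -(1 / (4 * (Real.pi : ℂ))) * I := by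
    simp only [I]
    rw [integral_prod _ hHint, ← integral_const_mul, ← integral_complex_ofReal]
    refine integral_congr_ae ?_
    filter_upwards [heq] with x hx
    have e1 : ((V x * ‖φ x‖ ^ 2 : ℝ) : ℂ) = f x * conj (φ x) := by
      simp only [hf]
      rw [mul_assoc, Complex.mul_conj, Complex.normSq_eq_norm_sq]
      push_cast; ring
    rw [e1]
    have e2 : conj (φ x) = -(1 / (4 * (Real.pi : ℂ))) * ∫ y, conj (f y) * ((‖x - y‖⁻¹ : ℝ) : ℂ) := by
      rw [hx.2, map_mul, ← integral_conj]
      congr 1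
      · simp [map_ofNat (starRingEnd ℂ) 4]
      · refine integral_congr_ae (Filter.Eventually.of_forall fun y => ?_)
        simp [hf, div_eq_mul_inv]
    rw [e2]
    have e3 : ∀ y, f x * conj (f y) * ((‖x - y‖⁻¹ : ℝ) : ℂ) =
      f x * (conj (f y) * ((‖x - y‖⁻¹ : ℝ) : ℂ)) := fun y => by ring
    simp_rw [e3]
    rw [integral_const_mul]
    ring
  set J := ∫ w, ‖∫ x, f x * (gF x w : ℂ)‖ ^ 2 ∂muW with hJ
  have hJ0 : 0 ≤ J := integral_nonneg fun w => by positivity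
  have hreal : (∫ x : E3, V x * ‖φ x‖ ^ 2) = -(1 / (4 * Real.pi * c)) * J := by
    have hcc : (c : ℂ) ≠ 0 := by exact_mod_cast hc.ne'
    have hpi : (Real.pi : ℂ) ≠ 0 := by exact_mod_cast Real.pi_ne_zero
    have : I = (J : ℂ) / c := by
      rw [← hE]; field_simp
    rw [this] at hIeq
    apply Complex.ofReal_injective
    rw [hIeq]
    push_cast
    field_simp
  have hpc : 0 < 1 / (4 * Real.pi * c) := by positivity
  refine ⟨hIntg, ?_, fun h0 => ?_⟩
  · rw [hreal]; nlinarith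
  · have hJz : J = 0 := by
      rw [hreal] at h0
      exact (mul_eq_zero.mp h0).resolve_left (neg_ne_zero.mpr hpc.ne')
    have hz := (integral_eq_zero_iff_of_nonneg (fun w => by positivity) hFint).mp hJz
    have hz' : ∀ᵐ w ∂muW, ∫ x, f x * (gF x w : ℂ) = 0 := by
      filter_upwards [hz] with w hw
      simpa using hw
    filter_upwards [potential_zero hfm hz', heq] with x hx1 hx2
    rw [hx2.2, hx1 hx2.1]
    simp
end

section
/- Let V : ℝ³ → ℝ be measurable with V ∈ L^{3/2,1}(ℝ³), and let φ ∈ 𝓜, i.e. φ : ℝ³ → ℂ is essentially bounded and satisfies for a.e. x that y ↦ V(y)φ(y)/‖x−y‖ is integrable and φ(x) = −(1/(4π)) ∫_{ℝ³} V(y)φ(y)/‖x−y‖ dy. Then there is a constant C such that |φ(x)| ≤ C/(1 + ‖x‖) for a.e. x ∈ ℝ³. -/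
open MeasureTheory ENNReal

/-- The real Newton kernel (without the constant), as an extended nonnegative real. -/
noncomputable def nker (x y : E3) : ℝ≥0∞ := ENNReal.ofReal (‖x - y‖⁻¹)

lemma measurable_nker (x : E3) : Measurable (nker x) := by
  unfold nker; fun_prop

lemma tail_lint (s : ℝ) (hs : 0 < s) :
    ∫⁻ t in Set.Ioi s, ENNReal.ofReal (t⁻¹ ^ 3) = ENNReal.ofReal (s⁻¹ ^ 2 / 2) := by
  have h1 := integral_Ioi_rpow_of_lt (a := -3) (by norm_num) hs
  have h2 := integrableOn_Ioi_rpow_of_lt (a := -3) (by norm_num) hs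
  have h3 := ofReal_integral_eq_lintegral_ofReal h2 (by
    filter_upwards [ae_restrict_mem measurableSet_Ioi] with t ht
    exact Real.rpow_nonneg (hs.le.trans (le_of_lt ht)) _)
  rw [h1] at h3
  have h4 : ∀ t : ℝ, 0 < t → t ^ (-3 : ℝ) = t⁻¹ ^ 3 := by
    intro t ht
    rw [Real.rpow_neg ht.le, inv_pow]
    norm_cast
  have h5 : s ^ (-2 : ℝ) = s⁻¹ ^ 2 := by
    rw [Real.rpow_neg hs.le, inv_pow]
    norm_cast
  rw [setLIntegral_congr_fun measurableSet_Ioi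
    (g := fun t : ℝ => ENNReal.ofReal (t ^ (-3 : ℝ)))
    (fun t ht => by simp only [h4 t (hs.trans ht)]), ← h3]
  congr 1
  norm_num

lemma ker_set_bound : ∃ K : ℝ≥0∞, K ≠ ⊤ ∧ ∀ (x : E3) (E : Set E3), MeasurableSet E →
    ∫⁻ y in E, nker x y ≤ K * volume E ^ ((2 : ℝ) / 3) := by
  set c := volume (Metric.ball (0 : E3) 1) with hc
  have hcf : c ≠ ⊤ := measure_ball_lt_top.ne
  refine ⟨1 + c, by simp [hcf], fun x E hE => ?_⟩
  rcases eq_or_ne (volume E) 0 with h0 | h0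
  · rw [Measure.restrict_eq_zero.2 h0]; simp
  rcases eq_or_ne (volume E) ⊤ with ht | ht
  · rw [ht, ENNReal.top_rpow_of_pos (by norm_num), ENNReal.mul_top (by simp)]
    exact le_top
  set m := (volume E).toReal with hm
  have hmpos : 0 < m := ENNReal.toReal_pos h0 ht
  have hmE : volume E = ENNReal.ofReal m := (ENNReal.ofReal_toReal ht).symm
  set s : ℝ := m ^ (-(1:ℝ)/3) with hs
  have hspos : 0 < s := Real.rpow_pos_of_pos hmpos _
  unfold nker
  rw [lintegral_eq_lintegral_meas_lt _ (Filter.Eventually.of_forall fun y => by positivity)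
    (by fun_prop)]
  rw [← Set.Ioc_union_Ioi_eq_Ioi hspos.le, lintegral_union measurableSet_Ioi
    (Set.Ioc_disjoint_Ioi le_rfl)]
  have hA : ∫⁻ t in Set.Ioc 0 s, (volume.restrict E) {a : E3 | t < ‖x - a‖⁻¹}
      ≤ ENNReal.ofReal (m * s) := by
    calc _ ≤ ∫⁻ t in Set.Ioc 0 s, volume E := by
          refine lintegral_mono fun t => ?_
          exact (measure_mono (Set.subset_univ _)).trans (by simp)
      _ = _ := by
          simp [hmE, ENNReal.ofReal_mul hmpos.le]
  have hB : ∫⁻ t in Set.Ioi s, (volume.restrict E) {a : E3 | t < ‖x - a‖⁻¹}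
      ≤ c * ENNReal.ofReal (s⁻¹ ^ 2 / 2) := by
    rw [← tail_lint s hspos, ← lintegral_const_mul' _ _ hcf]
    refine setLIntegral_mono' measurableSet_Ioi fun t ht => ?_
    have htp : 0 < t := hspos.trans ht
    calc _ ≤ volume {a : E3 | t < ‖x - a‖⁻¹} := Measure.restrict_apply_le _ _
      _ ≤ volume (Metric.ball x t⁻¹) := by
          refine measure_mono fun a ha => ?_
          simp only [Set.mem_ofPred_eq] at ha
          rw [Metric.mem_ball, dist_comm, dist_eq_norm]
          have : 0 < ‖x - a‖ := inv_pos.1 (htp.trans ha)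
          exact (lt_inv_comm₀ htp this).1 ha
      _ = _ := by
          rw [Measure.addHaar_ball _ _ (by positivity)]
          simp [hc, mul_comm]
  have e1 : m * s = m ^ ((2:ℝ)/3) := by
    rw [hs]; nth_rewrite 1 [← Real.rpow_one m]
    rw [← Real.rpow_add hmpos]; norm_num
  have e2 : s⁻¹ ^ 2 = m ^ ((2:ℝ)/3) := by
    rw [hs, ← Real.rpow_neg hmpos.le, ← Real.rpow_natCast, ← Real.rpow_mul hmpos.le]; norm_num
  have e3 : volume E ^ ((2:ℝ)/3) = ENNReal.ofReal (m ^ ((2:ℝ)/3)) := by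
    rw [hmE, ENNReal.ofReal_rpow_of_pos hmpos]
  refine (add_le_add hA hB).trans ?_
  rw [e1, e2, e3, add_mul, one_mul]
  gcongr
  have : 0 ≤ m ^ ((2:ℝ)/3) := by positivity
  linarith

lemma ker_bound : ∃ K : ℝ≥0∞, K ≠ ⊤ ∧ ∀ (x : E3) (f : E3 → ℝ), Measurable f →
    ∫⁻ y, ‖f y‖ₑ * nker x y ≤ K * lorentzNorm321 f := by
  obtain ⟨K, hK, h⟩ := ker_set_bound
  refine ⟨K, hK, fun x f hf => ?_⟩
  have e : ∫⁻ y, ‖f y‖ₑ * nker x y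
      = ∫⁻ y, ENNReal.ofReal ‖f y‖ ∂(volume.withDensity (nker x)) := by
    rw [lintegral_withDensity_eq_lintegral_mul _ (measurable_nker x) (by fun_prop)]
    refine lintegral_congr fun y => ?_
    rw [Pi.mul_apply, ofReal_norm, mul_comm]
  rw [e, lintegral_eq_lintegral_meas_lt _ (Filter.Eventually.of_forall fun y => norm_nonneg _)
    (by fun_prop)]
  unfold lorentzNorm321
  rw [← lintegral_const_mul' _ _ hK]
  refine lintegral_mono fun t => ?_
  have hE : MeasurableSet {a : E3 | t < ‖f a‖} := measurableSet_lt measurable_const hf.norm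
  simp only
  rw [withDensity_apply _ hE]
  exact h x _ hE

lemma measurable_dist_fun (f : E3 → ℝ) :
    Measurable (fun t : ℝ => volume {x : E3 | t < ‖f x‖} ^ ((2 : ℝ) / 3)) := by
  have : Antitone (fun t : ℝ => volume {x : E3 | t < ‖f x‖}) := fun a b hab =>
    measure_mono fun x hx => lt_of_le_of_lt hab hx
  exact this.measurable.pow_const _

lemma tail_small (f : E3 → ℝ) (hf : Measurable f) (h : MemL321 f) :
    Filter.Tendsto (fun n : ℕ => lorentzNorm321 ({y : E3 | (n : ℝ) < ‖y‖}.indicator f))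
      Filter.atTop (nhds 0) := by
  have hfin : ∀ᵐ t ∂(volume.restrict (Set.Ioi (0:ℝ))),
      volume {x : E3 | t < ‖f x‖} ^ ((2 : ℝ) / 3) < ⊤ :=
    ae_lt_top (measurable_dist_fun f) (ne_of_lt h)
  have key := tendsto_lintegral_of_dominated_convergence
    (μ := volume.restrict (Set.Ioi (0:ℝ)))
    (F := fun (n : ℕ) t => volume {x : E3 | t < ‖{y : E3 | (n : ℝ) < ‖y‖}.indicator f x‖}
      ^ ((2 : ℝ) / 3)) (f := fun _ => 0)
    (fun t : ℝ => volume {x : E3 | t < ‖f x‖} ^ ((2 : ℝ) / 3))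
    (fun n => measurable_dist_fun _)
    (fun n => by
      filter_upwards [ae_restrict_mem measurableSet_Ioi] with t ht
      refine ENNReal.rpow_le_rpow (measure_mono fun x hx => ?_) (by norm_num)
      exact lt_of_lt_of_le hx (norm_indicator_le_norm_self _ _))
    (ne_of_lt h)
    (by
      filter_upwards [ae_restrict_mem measurableSet_Ioi, hfin] with t ht hft
      have ht0 : (0:ℝ) < t := ht
      have hset : ∀ n : ℕ, {x : E3 | t < ‖{y : E3 | (n : ℝ) < ‖y‖}.indicator f x‖}
          = {x : E3 | t < ‖f x‖} ∩ {y : E3 | (n : ℝ) < ‖y‖} := by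
        intro n
        ext x
        by_cases hx : (n : ℝ) < ‖x‖
        · simp [Set.indicator, hx]
        · simp [Set.indicator, hx, ht0.le]
      simp only [hset]
      have hv : volume {x : E3 | t < ‖f x‖} ≠ ⊤ := by
        intro hh
        rw [hh, ENNReal.top_rpow_of_pos (by norm_num)] at hft
        exact lt_irrefl _ hft
      have hlim := tendsto_measure_iInter_atTop (μ := (volume : Measure E3))
        (s := fun n : ℕ => {x : E3 | t < ‖f x‖} ∩ {y : E3 | (n : ℝ) < ‖y‖})
        (fun n => ((measurableSet_lt measurable_const hf.norm).inter
          (measurableSet_lt measurable_const measurable_norm)).nullMeasurableSet)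
        (fun a b hab => Set.inter_subset_inter_right _ fun y hy =>
          (lt_of_le_of_lt (Nat.cast_le.2 hab) hy : (a : ℝ) < ‖y‖))
        ⟨0, ne_top_of_le_ne_top hv (measure_mono Set.inter_subset_left)⟩
      have hemp : (⋂ n : ℕ, {x : E3 | t < ‖f x‖} ∩ {y : E3 | (n : ℝ) < ‖y‖}) = ∅ := by
        ext y
        simp only [Set.mem_iInter, Set.mem_empty_iff_false, iff_false]
        intro hy
        obtain ⟨n, hn⟩ := exists_nat_ge ‖y‖
        exact absurd (hy n).2 (not_lt.2 hn)
      rw [hemp, measure_empty] at hlim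
      have := hlim.ennrpow_const ((2:ℝ)/3)
      rwa [ENNReal.zero_rpow_of_pos (by norm_num)] at this)
  simpa [lorentzNorm321] using key

/-- The weight `1/(1+|x|)`. -/
noncomputable def wgt (x : E3) : ℝ≥0∞ := ENNReal.ofReal (1 + ‖x‖)⁻¹

lemma weight_far (x y : E3) (hy : y ≠ 0) :
    nker x y * wgt y ≤ (nker x y + nker 0 y) * wgt x := by
  unfold nker wgt
  rw [← ENNReal.ofReal_add (by positivity) (by positivity),
    ← ENNReal.ofReal_mul (by positivity), ← ENNReal.ofReal_mul (by positivity)]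
  apply ENNReal.ofReal_le_ofReal
  have hy' : 0 < ‖y‖ := norm_pos_iff.2 hy
  rw [zero_sub, norm_neg]
  rcases eq_or_ne x y with rfl | hxy
  · simp; positivity
  have hd : 0 < ‖x - y‖ := norm_pos_iff.2 (sub_ne_zero.2 hxy)
  have htri : ‖x‖ ≤ ‖x - y‖ + ‖y‖ := by simpa using norm_add_le (x - y) y
  have hx := norm_nonneg x
  rw [← div_eq_mul_inv, ← div_eq_mul_inv, div_le_div_iff₀ (by positivity) (by positivity)]
  field_simp
  nlinarith [mul_pos hd hy']

lemma weight_near (R : ℝ) (x y : E3) (hy : y ≠ 0) (hR : ‖y‖ ≤ R) :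
    nker x y ≤ ENNReal.ofReal (1 + R) * (nker x y + nker 0 y) * wgt x := by
  have hy' : 0 < ‖y‖ := norm_pos_iff.2 hy
  have h := weight_far x y hy
  have h1 : 1 ≤ ENNReal.ofReal (1 + R) * wgt y := by
    unfold wgt
    rw [← ENNReal.ofReal_mul (by linarith), ENNReal.one_le_ofReal, ← div_eq_mul_inv,
      le_div_iff₀ (by positivity)]
    linarith
  calc nker x y = nker x y * 1 := (mul_one _).symm
    _ ≤ nker x y * (ENNReal.ofReal (1 + R) * wgt y) := by gcongr
    _ = ENNReal.ofReal (1 + R) * (nker x y * wgt y) := by ring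
    _ ≤ _ := by rw [mul_assoc]; gcongr

theorem resonance_decay (V : E3 → ℝ) (hVmeas : Measurable V) (hV : MemL321 V)
    (φ : E3 → ℂ) (hφmeas : Measurable φ) (hφbdd : ∃ C : ℝ, ∀ᵐ x : E3 ∂volume, ‖φ x‖ ≤ C)
    (heq : ∀ᵐ x : E3 ∂volume,
      Integrable (fun y : E3 => (V y : ℂ) * φ y / (‖x - y‖ : ℂ)) volume ∧
      φ x = -(1 / (4 * (Real.pi : ℂ))) * ∫ y : E3, (V y : ℂ) * φ y / (‖x - y‖ : ℂ)) :
    ∃ C : ℝ, ∀ᵐ x : E3 ∂volume, ‖φ x‖ ≤ C / (1 + ‖x‖) := by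
  obtain ⟨K, hK, hker⟩ := ker_bound
  obtain ⟨C, hC⟩ := hφbdd
  set b := ENNReal.ofReal C with hb
  have hub : ∀ᵐ x : E3 ∂volume, ‖φ x‖ₑ ≤ b := by
    filter_upwards [hC] with x hx
    rw [← ofReal_norm]
    exact ENNReal.ofReal_le_ofReal hx
  have hne : ∀ᵐ y : E3 ∂volume, y ≠ 0 := by
    simp [ae_iff]
  set T := K * lorentzNorm321 V with hT
  have hTf : T ≠ ⊤ := ENNReal.mul_ne_top hK (ne_of_lt hV)
  -- integral inequality
  have hint : ∀ᵐ x : E3 ∂volume, ‖φ x‖ₑ ≤ ∫⁻ y, ‖V y‖ₑ * nker x y * ‖φ y‖ₑ := by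
    filter_upwards [heq] with x hx
    rw [hx.2, enorm_mul]
    have h1 : ‖-(1 / (4 * (Real.pi : ℂ)))‖ₑ ≤ 1 := by
      rw [← ofReal_norm, ENNReal.ofReal_le_one, norm_neg, norm_div, norm_mul,
        Complex.norm_real, Real.norm_of_nonneg Real.pi_pos.le]
      simp only [norm_one, RCLike.norm_ofNat]
      rw [div_le_one (by positivity)]
      linarith [Real.pi_gt_three]
    calc _ ≤ 1 * ∫⁻ y, ‖(V y : ℂ) * φ y / (‖x - y‖ : ℂ)‖ₑ := by
          gcongr
          exact enorm_integral_le_lintegral_enorm _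
      _ = _ := by
          rw [one_mul]
          refine lintegral_congr fun y => ?_
          unfold nker
          rw [← ofReal_norm, ← ofReal_norm, ← ofReal_norm,
            ← ENNReal.ofReal_mul (by positivity), ← ENNReal.ofReal_mul (by positivity)]
          congr 1
          rw [norm_div, norm_mul, Complex.norm_real, Complex.norm_real, norm_norm]
          ring
  -- choose the radius
  have hsm : Filter.Tendsto (fun n : ℕ =>
      K * lorentzNorm321 ({y : E3 | (n : ℝ) < ‖y‖}.indicator V)) Filter.atTop (nhds 0) := by
    simpa using ENNReal.Tendsto.const_mul (tail_small V hVmeas hV) (Or.inr hK)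
  obtain ⟨n, hn⟩ := (hsm.eventually_le_const (u := (4⁻¹ : ℝ≥0∞)) (by simp)).exists
  set S : Set E3 := {y : E3 | (n : ℝ) < ‖y‖} with hS
  have hSm : MeasurableSet S := measurableSet_lt measurable_const measurable_norm
  have hfar : ∀ x, ∫⁻ y in S, ‖V y‖ₑ * nker x y ≤ 4⁻¹ := by
    intro x
    refine le_trans (le_of_eq ?_) ((hker x (S.indicator V) (hVmeas.indicator hSm)).trans hn)
    rw [← lintegral_indicator hSm]
    refine lintegral_congr fun y => ?_
    by_cases hy : y ∈ S <;> simp [hy]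
  have mVV : ∀ x, Measurable (fun y => ‖V y‖ₑ * nker x y + ‖V y‖ₑ * nker 0 y) := fun x =>
    (hVmeas.enorm.mul (measurable_nker x)).add (hVmeas.enorm.mul (measurable_nker 0))
  have mV : ∀ x, Measurable (fun y => ‖V y‖ₑ * nker x y) := fun x =>
    hVmeas.enorm.mul (measurable_nker x)
  set A : ℝ≥0∞ := b * ENNReal.ofReal (1 + n) * (T + T) with hA
  have hAf : A ≠ ⊤ := by
    refine ENNReal.mul_ne_top (ENNReal.mul_ne_top ?_ ?_) (ENNReal.add_ne_top.2 ⟨hTf, hTf⟩) <;>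
    simp [hb]
  have hwf : ∀ x, wgt x ≠ ⊤ := fun x => by simp [wgt]
  have hnear : ∀ x, ∫⁻ y in Sᶜ, ‖V y‖ₑ * nker x y * ‖φ y‖ₑ ≤ A * wgt x := by
    intro x
    calc _ ≤ ∫⁻ y in Sᶜ, (b * ENNReal.ofReal (1 + n) * wgt x) *
            (‖V y‖ₑ * nker x y + ‖V y‖ₑ * nker 0 y) := by
          refine lintegral_mono_ae ?_
          filter_upwards [ae_restrict_mem hSm.compl, ae_restrict_of_ae hub,
            ae_restrict_of_ae hne] with y hy hyb hy0
          have hyn : ‖y‖ ≤ n := not_lt.1 hy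
          calc _ ≤ ‖V y‖ₑ * (ENNReal.ofReal (1 + n) * (nker x y + nker 0 y) * wgt x) * b := by
                gcongr
                exact weight_near n x y hy0 hyn
            _ = _ := by ring
      _ ≤ ∫⁻ y, (b * ENNReal.ofReal (1 + n) * wgt x) *
            (‖V y‖ₑ * nker x y + ‖V y‖ₑ * nker 0 y) := setLIntegral_le_lintegral _ _
      _ = (b * ENNReal.ofReal (1 + n) * wgt x) *
            ((∫⁻ y, ‖V y‖ₑ * nker x y) + ∫⁻ y, ‖V y‖ₑ * nker 0 y) := by
          rw [lintegral_const_mul _ (mVV x), lintegral_add_left (mV x)]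
      _ ≤ (b * ENNReal.ofReal (1 + n) * wgt x) * (T + T) := by
          gcongr
          · exact hker x V hVmeas
          · exact hker 0 V hVmeas
      _ = _ := by rw [hA]; ring
  have hq : (4⁻¹ + 4⁻¹ : ℝ≥0∞) = 2⁻¹ := by
    have h4 : (4:ℝ≥0∞) = 2 * 2 := by norm_num
    rw [h4, ENNReal.mul_inv (by simp) (by simp), ← mul_add, ENNReal.inv_two_add_inv_two, mul_one]
  have hiter : ∀ k : ℕ, ∀ᵐ x : E3 ∂volume, ‖φ x‖ₑ ≤ 2 * A * wgt x + 2⁻¹ ^ k * b := by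
    intro k
    induction k with
    | zero =>
      filter_upwards [hub] with x hx
      simpa using hx.trans le_add_self
    | succ k ih =>
      filter_upwards [hint] with x hx
      refine hx.trans ?_
      rw [← lintegral_add_compl _ hSm]
      have hSfar : ∫⁻ y in S, ‖V y‖ₑ * nker x y * ‖φ y‖ₑ ≤ A * wgt x + 2⁻¹ ^ (k+1) * b := by
        calc _ ≤ ∫⁻ y in S, ((2 * A * wgt x) * (‖V y‖ₑ * nker x y + ‖V y‖ₑ * nker 0 y)
              + (2⁻¹ ^ k * b) * (‖V y‖ₑ * nker x y)) := by
              refine lintegral_mono_ae ?_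
              filter_upwards [ae_restrict_of_ae ih, ae_restrict_of_ae hne] with y hyb hy0
              calc _ ≤ ‖V y‖ₑ * nker x y * (2 * A * wgt y + 2⁻¹ ^ k * b) := by gcongr
                _ = 2 * A * ‖V y‖ₑ * (nker x y * wgt y)
                    + (2⁻¹ ^ k * b) * (‖V y‖ₑ * nker x y) := by ring
                _ ≤ 2 * A * ‖V y‖ₑ * ((nker x y + nker 0 y) * wgt x)
                    + (2⁻¹ ^ k * b) * (‖V y‖ₑ * nker x y) := by
                    gcongr 2 * A * ‖V y‖ₑ * ?_ + _
                    exact weight_far x y hy0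
                _ = _ := by ring
          _ = (2 * A * wgt x) * ((∫⁻ y in S, ‖V y‖ₑ * nker x y)
                + ∫⁻ y in S, ‖V y‖ₑ * nker 0 y)
              + (2⁻¹ ^ k * b) * ∫⁻ y in S, ‖V y‖ₑ * nker x y := by
              rw [lintegral_add_left ((mVV x).const_mul _),
                lintegral_const_mul _ (mVV x), lintegral_add_left (mV x),
                lintegral_const_mul _ (mV x)]
          _ ≤ (2 * A * wgt x) * (4⁻¹ + 4⁻¹) + (2⁻¹ ^ k * b) * 2⁻¹ := by
              gcongr
              · exact hfar x
              · exact hfar 0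
              · refine (hfar x).trans ?_
                rw [← hq]; exact le_add_self
          _ = (2 * 2⁻¹) * A * wgt x + 2⁻¹ ^ (k+1) * b := by rw [hq]; ring
          _ = _ := by rw [ENNReal.mul_inv_cancel (by simp) (by simp), one_mul]
      calc _ ≤ (A * wgt x + 2⁻¹ ^ (k+1) * b) + A * wgt x := add_le_add hSfar (hnear x)
        _ = _ := by ring
  refine ⟨(2 * A).toReal, ?_⟩
  filter_upwards [ae_all_iff.2 hiter] with x hx
  have hlim : Filter.Tendsto (fun k : ℕ => 2 * A * wgt x + (2⁻¹ : ℝ≥0∞) ^ k * b)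
      Filter.atTop (nhds (2 * A * wgt x)) := by
    have h1 : Filter.Tendsto (fun k : ℕ => (2⁻¹ : ℝ≥0∞) ^ k) Filter.atTop (nhds 0) :=
      ENNReal.tendsto_pow_atTop_nhds_zero_of_lt_one (by simp)
    have h2 := ENNReal.Tendsto.mul_const h1 (b := b) (Or.inr (by simp [hb]))
    simpa using tendsto_const_nhds.add h2
  have hfin := ge_of_tendsto' hlim hx
  have h2A : 2 * A ≠ ⊤ := ENNReal.mul_ne_top (by simp) hAf
  have := ENNReal.toReal_mono (ENNReal.mul_ne_top h2A (hwf x)) hfin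
  rw [toReal_enorm, ENNReal.toReal_mul, wgt, ENNReal.toReal_ofReal (by positivity)] at this
  rwa [div_eq_mul_inv]
end
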